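/- Let ((v_k(t))_{k≥1,t∈[0,T]}, r) be a solution of the integrated Burgers control problem such that Σ_{k≥1} v_k(t) = 1 for every t ∈ [0,T] and Σ_{k≥1} k² v_k(0) < ∞, and suppose T ≥ T_gel := (Σ_k k v_k(0))^{−1}. Then for every t̄ ∈ [T_gel, T] and x̄ > 0 there exists a constant C > 0 such that −∂_x V(t,x) ≥ C·x^{−1/2} for all (t,x) ∈ [T_gel, t̄] × (0, x̄]. In particular, lim_{x→0⁺} ∂_x V(t,x) = −∞ for every t ∈ [T_gel, T]. -/

import Mathlib

open MeasureTheory Filter Topology Set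

/-- The generating function of the time-dependent cluster size distribution
`(v_k(t))_{k ≥ 1}`: `V(t,x) = ∑_{k≥1} v_k(t) e^(−kx) − 1`. -/
noncomputable def genFun (v : ℕ → ℝ → ℝ) (t x : ℝ) : ℝ :=
  (∑' k : ℕ, v (k + 1) t * Real.exp (-((k : ℝ) + 1) * x)) - 1

/-- `(v, r)` is a solution of the integrated Burgers control problem on `[0, T]`:
the `v_k(t)` are nonnegative with total mass at most one, `r` is nondecreasing on
`[0, T]` with `r 0 = 0`, `r T ≤ 1 + T/2`, and the generating function satisfies
`V(t,x) − V(0,x) + ∫₀ᵗ V(s,x)·∂ₓV(s,x) ds = e^(−x)·r(t)` for `t ∈ [0,T]`, `x > 0`. -/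
def IsBurgersSolution (T : ℝ) (v : ℕ → ℝ → ℝ) (r : ℝ → ℝ) : Prop :=
  (∀ k, 1 ≤ k → ∀ t ∈ Set.Icc (0:ℝ) T, 0 ≤ v k t) ∧
  (∀ t ∈ Set.Icc (0:ℝ) T, Summable (fun k : ℕ => v (k + 1) t)) ∧
  (∀ t ∈ Set.Icc (0:ℝ) T, (∑' k : ℕ, v (k + 1) t) ≤ 1) ∧
  MonotoneOn r (Set.Icc 0 T) ∧
  r 0 = 0 ∧
  (∀ t ∈ Set.Icc (0:ℝ) T, 0 ≤ r t) ∧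
  r T ≤ 1 + T / 2 ∧
  (∀ t ∈ Set.Icc (0:ℝ) T, ∀ x : ℝ, 0 < x →
    genFun v t x - genFun v 0 x
        + ∫ s in (0:ℝ)..t, genFun v s x * deriv (genFun v s) x
      = Real.exp (-x) * r t)

/-- `E(t,x) = −(∂ₓV(t,x))³ / ∂ₓ²V(t,x)`. -/
noncomputable def EFun (v : ℕ → ℝ → ℝ) (t x : ℝ) : ℝ :=
  -(deriv (genFun v t) x) ^ 3 / iteratedDeriv 2 (genFun v t) x

/-!
Write `M_n(t,x) = ∑ kⁿ v_k(t) e^(−kx) = (−∂ₓ)ⁿ (V + 1)`. Along the characteristics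
`ẋ = −(1 − M₀)` of Burgers' equation, `Ṁ₁ = M₁² + e^(−x) ṙ` and `Ṁ₂ = 3 M₁ M₂ + e^(−x) ṙ`. The
control `r` may jump, so these equations are used only through Euler steps, whose second-order
errors add up to nothing on refining the subdivision.

The quotient `M₂ / M₁³` therefore stays bounded near `x = 0` by its initial values, where
`∑ k² v_k(0) < ∞` enters. Since `∂ₓ (M₁⁻²) = 2 M₂ / M₁³`, this makes `M₁⁻²` Lipschitz in `x`, and
`M₁ ≥ C x^(−1/2)` follows once `M₁(t, 0⁺) = ∞`.

If instead `M₁(t, ·) ≤ L`, then conservation of mass gives `1 − M₀ ≤ L x`, so characteristics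
starting at positive points do not reach `0`. The Lipschitz bound lets one propagate `M₁ ≤ L` back
to time `0`, and `Ṁ₁ ≥ M₁²` yields `1 / M₁(0, 0) ≥ 1 / L + t > t`, that is, `t < T_gel`.
-/

section TiltedMoment

/-- The `k`-th term of the tilted moment of order `n`; since cluster sizes start at `1`, the weight
`w k` is that of the size `k + 1`. -/
noncomputable def tiltedTerm (w : ℕ → ℝ) (n : ℕ) (x : ℝ) (k : ℕ) : ℝ :=
  ((k : ℝ) + 1) ^ n * w k * Real.exp (-((k : ℝ) + 1) * x)

/-- The moment of order `n` of the weights `w` tilted by `e^(−kx)`, that is, `(−∂ₓ)ⁿ` of the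
generating function of `w`. -/
noncomputable def tiltedMoment (w : ℕ → ℝ) (n : ℕ) (x : ℝ) : ℝ :=
  ∑' k, tiltedTerm w n x k

variable {w : ℕ → ℝ} {n : ℕ} {x y : ℝ}

lemma pow_mul_exp_neg_mul_le (n : ℕ) {a x : ℝ} (ha : 0 ≤ a) (hx : 0 < x) :
    a ^ n * Real.exp (-a * x) ≤ n.factorial / x ^ n := by
  have h := Real.pow_div_factorial_le_exp (a * x) (by positivity) n
  rw [div_le_iff₀ (by positivity), mul_pow] at h
  rw [neg_mul, Real.exp_neg, ← div_eq_mul_inv, div_le_div_iff₀ (by positivity) (by positivity)]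
  linarith

lemma tiltedTerm_nonneg (hw : ∀ k, 0 ≤ w k) (n : ℕ) (x : ℝ) (k : ℕ) : 0 ≤ tiltedTerm w n x k :=
  mul_nonneg (mul_nonneg (by positivity) (hw k)) (Real.exp_nonneg _)

lemma tiltedTerm_le (hw : ∀ k, 0 ≤ w k) (n : ℕ) (hx : 0 < x) (k : ℕ) :
    tiltedTerm w n x k ≤ n.factorial / x ^ n * w k := by
  calc tiltedTerm w n x k = ((k : ℝ) + 1) ^ n * Real.exp (-((k : ℝ) + 1) * x) * w k := by
        unfold tiltedTerm; ring
    _ ≤ n.factorial / x ^ n * w k :=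
        mul_le_mul_of_nonneg_right (pow_mul_exp_neg_mul_le n (by positivity) hx) (hw k)

lemma tiltedTerm_antitone (hw : ∀ k, 0 ≤ w k) (n k : ℕ) : Antitone (tiltedTerm w n · k) := by
  intro x y hxy
  have := hw k
  simp only [tiltedTerm]
  gcongr ?_ * Real.exp ?_
  nlinarith [Nat.cast_nonneg (α := ℝ) k]

lemma tiltedTerm_tangent_le (hw : ∀ k, 0 ≤ w k) (n : ℕ) (x y : ℝ) (k : ℕ) :
    tiltedTerm w n x k - (y - x) * tiltedTerm w (n + 1) x k ≤ tiltedTerm w n y k := by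
  have hexp := Real.add_one_le_exp (-((k : ℝ) + 1) * (y - x))
  have hadd : tiltedTerm w n y k = tiltedTerm w n x k * Real.exp (-((k : ℝ) + 1) * (y - x)) := by
    rw [tiltedTerm, tiltedTerm, mul_assoc _ (Real.exp _), ← Real.exp_add]
    ring_nf
  calc tiltedTerm w n x k - (y - x) * tiltedTerm w (n + 1) x k
      = tiltedTerm w n x k * (-((k : ℝ) + 1) * (y - x) + 1) := by unfold tiltedTerm; ring
    _ ≤ tiltedTerm w n y k := hadd ▸ mul_le_mul_of_nonneg_left hexp (tiltedTerm_nonneg hw n x k)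

lemma tiltedTerm_le_succ (hw : ∀ k, 0 ≤ w k) (n : ℕ) (x : ℝ) (k : ℕ) :
    tiltedTerm w n x k ≤ tiltedTerm w (n + 1) x k := by
  have := hw k
  unfold tiltedTerm
  gcongr
  · simp
  · exact n.le_succ

lemma summable_tiltedTerm_of_succ (hw : ∀ k, 0 ≤ w k)
    (h : Summable (tiltedTerm w (n + 1) x)) : Summable (tiltedTerm w n x) :=
  .of_nonneg_of_le (tiltedTerm_nonneg hw n x) (tiltedTerm_le_succ hw n x) h

lemma summable_tiltedTerm (hw : ∀ k, 0 ≤ w k) (hs : Summable w) (n : ℕ) (hx : 0 < x) :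
    Summable (tiltedTerm w n x) :=
  .of_nonneg_of_le (tiltedTerm_nonneg hw n x) (tiltedTerm_le hw n hx) (hs.mul_left _)

lemma tiltedMoment_nonneg (hw : ∀ k, 0 ≤ w k) (n : ℕ) (x : ℝ) : 0 ≤ tiltedMoment w n x :=
  tsum_nonneg (tiltedTerm_nonneg hw n x)

lemma tiltedMoment_pos (hw : ∀ k, 0 ≤ w k) (h : Summable (tiltedTerm w n x)) {k : ℕ}
    (hk : 0 < w k) : 0 < tiltedMoment w n x :=
  h.tsum_pos (tiltedTerm_nonneg hw n x) k (by unfold tiltedTerm; positivity)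

lemma tiltedMoment_le (hw : ∀ k, 0 ≤ w k) (hs : Summable w) (hs1 : ∑' k, w k ≤ 1) (n : ℕ)
    (hx : 0 < x) : tiltedMoment w n x ≤ n.factorial / x ^ n := by
  calc tiltedMoment w n x ≤ ∑' k, n.factorial / x ^ n * w k :=
        (summable_tiltedTerm hw hs n hx).tsum_le_tsum (tiltedTerm_le hw n hx) (hs.mul_left _)
    _ = n.factorial / x ^ n * ∑' k, w k := tsum_mul_left
    _ ≤ n.factorial / x ^ n := mul_le_of_le_one_right (by positivity) hs1

lemma tiltedMoment_anti (hw : ∀ k, 0 ≤ w k) (h : Summable (tiltedTerm w n x)) (hxy : x ≤ y) :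
    tiltedMoment w n y ≤ tiltedMoment w n x :=
  have hle : ∀ k, tiltedTerm w n y k ≤ tiltedTerm w n x k :=
    fun k => tiltedTerm_antitone hw n k hxy
  (h.of_nonneg_of_le (tiltedTerm_nonneg hw n y) hle).tsum_le_tsum hle h

lemma tiltedMoment_tangent_le (hw : ∀ k, 0 ≤ w k) (h : Summable (tiltedTerm w (n + 1) x))
    (h' : Summable (tiltedTerm w n y)) :
    tiltedMoment w n x - (y - x) * tiltedMoment w (n + 1) x ≤ tiltedMoment w n y := by
  have h₀ := summable_tiltedTerm_of_succ hw h
  have hmul := h.mul_left (y - x)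
  calc tiltedMoment w n x - (y - x) * tiltedMoment w (n + 1) x
      = ∑' k, (tiltedTerm w n x k - (y - x) * tiltedTerm w (n + 1) x k) := by
        rw [h₀.tsum_sub hmul, tsum_mul_left]; rfl
    _ ≤ tiltedMoment w n y := (h₀.sub hmul).tsum_le_tsum (tiltedTerm_tangent_le hw n x y) h'

lemma abs_tiltedMoment_sub_le (hw : ∀ k, 0 ≤ w k) (h : Summable (tiltedTerm w (n + 1) x))
    (hxy : x ≤ y) :
    |tiltedMoment w n y - tiltedMoment w n x| ≤ tiltedMoment w (n + 1) x * (y - x) := by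
  have h₀ := summable_tiltedTerm_of_succ hw h
  have hy : Summable (tiltedTerm w n y) :=
    h₀.of_nonneg_of_le (tiltedTerm_nonneg hw n y) fun k => tiltedTerm_antitone hw n k hxy
  have htan := tiltedMoment_tangent_le hw h hy
  have hanti := tiltedMoment_anti hw h₀ hxy
  exact abs_sub_le_iff.2
    ⟨by nlinarith [tiltedMoment_nonneg hw (n + 1) x], by linarith⟩

lemma abs_tiltedMoment_sub_tangent_le (hw : ∀ k, 0 ≤ w k) (hs : Summable w) (n : ℕ) (hx : 0 < x)
    (hxy : x ≤ y) :
    |tiltedMoment w n y - (tiltedMoment w n x - (y - x) * tiltedMoment w (n + 1) x)|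
      ≤ tiltedMoment w (n + 2) x * (y - x) ^ 2 := by
  have hsum (m : ℕ) {z : ℝ} (hz : 0 < z) := summable_tiltedTerm hw hs m hz
  have hy := hx.trans_le hxy
  have hlow := tiltedMoment_tangent_le hw (hsum (n + 1) hx) (hsum n hy)
  have hupp := tiltedMoment_tangent_le hw (hsum (n + 1) hy) (hsum n hx)
  have hslope := tiltedMoment_tangent_le hw (hsum (n + 2) hx) (hsum (n + 1) hy)
  have := tiltedMoment_nonneg hw (n + 2) x
  rw [abs_of_nonneg (by linarith)]
  nlinarith [mul_le_mul_of_nonneg_left hslope (sub_nonneg.2 hxy)]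

lemma hasDerivAt_tiltedTerm (n : ℕ) (x : ℝ) (k : ℕ) :
    HasDerivAt (tiltedTerm w n · k) (-tiltedTerm w (n + 1) x k) x := by
  refine (((hasDerivAt_id x).const_mul (-((k : ℝ) + 1))).exp.const_mul
    (((k : ℝ) + 1) ^ n * w k)).congr_deriv ?_
  simp only [tiltedTerm, id]
  ring

lemma hasDerivAt_tiltedMoment (hw : ∀ k, 0 ≤ w k) (hs : Summable w) (n : ℕ) (hx : 0 < x) :
    HasDerivAt (tiltedMoment w n) (-tiltedMoment w (n + 1) x) x := by
  have hmem : x ∈ Ioi (x / 2) := half_lt_self hx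
  refine (hasDerivAt_tsum_of_isPreconnected (𝕜 := ℝ)
    (summable_tiltedTerm hw hs (n + 1) (half_pos hx)) isOpen_Ioi isPreconnected_Ioi
    (fun k y _ => hasDerivAt_tiltedTerm n y k) (fun k y hy => ?_) hmem
    (summable_tiltedTerm hw hs n hx) hmem).congr_deriv tsum_neg
  rw [norm_neg, Real.norm_of_nonneg (tiltedTerm_nonneg hw _ _ _)]
  exact tiltedTerm_antitone hw (n + 1) k (le_of_lt hy)

lemma tendsto_tiltedMoment_zero (hw : ∀ k, 0 ≤ w k) (hs : Summable w) :
    Tendsto (tiltedMoment w 0) (𝓝[>] 0) (𝓝 (∑' k, w k)) := by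
  have hcont : ContinuousOn (tiltedMoment w 0) (Ici 0) := by
    refine continuousOn_tsum (fun k => ?_) hs fun k x hx => ?_
    · unfold tiltedTerm
      fun_prop
    · rw [Real.norm_of_nonneg (tiltedTerm_nonneg hw _ _ _)]
      simpa [tiltedTerm] using tiltedTerm_antitone hw 0 k (mem_Ici.1 hx)
  have hzero : tiltedMoment w 0 0 = ∑' k, w k := by simp [tiltedMoment, tiltedTerm]
  exact hzero ▸ (hcont 0 self_mem_Ici).mono_left (nhdsWithin_mono _ Ioi_subset_Ici_self)

lemma one_sub_tiltedMoment_zero_le (hw : ∀ k, 0 ≤ w k) (hs : HasSum w 1) (hx : 0 < x) {L : ℝ}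
    (hL : ∀ y, 0 < y → y ≤ x → tiltedMoment w 1 y ≤ L) :
    1 - tiltedMoment w 0 x ≤ L * x := by
  have hsum (m : ℕ) {z : ℝ} (hz : 0 < z) := summable_tiltedTerm hw hs.summable m hz
  have hL0 : 0 ≤ L := (tiltedMoment_nonneg hw 1 x).trans (hL x hx le_rfl)
  suffices ∀ᶠ y in 𝓝[>] 0, tiltedMoment w 0 y ≤ tiltedMoment w 0 x + L * x by
    have := le_of_tendsto (hs.tsum_eq ▸ tendsto_tiltedMoment_zero hw hs.summable) this
    linarith
  filter_upwards [Ioo_mem_nhdsGT hx] with y ⟨hy, hyx⟩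
  have htan := tiltedMoment_tangent_le hw (hsum 1 hy) (hsum 0 hx)
  have := mul_le_mul_of_nonneg_left (hL y hy hyx.le) (sub_nonneg.2 hyx.le)
  nlinarith

end TiltedMoment

section TiltedFlux

/-- `(−∂ₓ)^(n+1)` of `V²/2`, expanded by Leibniz' rule, where `V` is the generating function of the
weights `w` minus `1`. It is the rate of change of the moment of order `n` under Burgers'
equation. -/
noncomputable def tiltedFlux (w : ℕ → ℝ) (n : ℕ) (x : ℝ) : ℝ :=
  (∑ p ∈ Finset.HasAntidiagonal.antidiagonal (n + 1),
    ((n + 1).choose p.1 : ℝ) * (tiltedMoment w p.1 x * tiltedMoment w p.2 x)) / 2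
    - tiltedMoment w (n + 1) x

variable {w : ℕ → ℝ} {x : ℝ}

lemma tiltedFlux_zero (w : ℕ → ℝ) (x : ℝ) :
    tiltedFlux w 0 x = -(1 - tiltedMoment w 0 x) * tiltedMoment w 1 x := by
  simp only [tiltedFlux, Finset.Nat.antidiagonal_succ, Finset.Nat.antidiagonal_zero,
    Finset.map_singleton, Finset.sum_cons, Finset.sum_singleton]
  norm_num
  ring

lemma tiltedFlux_one (w : ℕ → ℝ) (x : ℝ) :
    tiltedFlux w 1 x
      = tiltedMoment w 1 x ^ 2 - (1 - tiltedMoment w 0 x) * tiltedMoment w 2 x := by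
  simp [tiltedFlux, Finset.Nat.antidiagonal_succ]
  ring

lemma tiltedFlux_two (w : ℕ → ℝ) (x : ℝ) :
    tiltedFlux w 2 x = 3 * tiltedMoment w 1 x * tiltedMoment w 2 x
      - (1 - tiltedMoment w 0 x) * tiltedMoment w 3 x := by
  simp [tiltedFlux, Finset.Nat.antidiagonal_succ, Nat.choose]
  ring

lemma hasDerivAt_tiltedFlux (hw : ∀ k, 0 ≤ w k) (hs : Summable w) (n : ℕ) (hx : 0 < x) :
    HasDerivAt (tiltedFlux w n) (-tiltedFlux w (n + 1) x) x := by
  have hM (m : ℕ) := hasDerivAt_tiltedMoment hw hs m hx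
  have hLeibniz := (HasDerivAt.fun_sum (u := Finset.HasAntidiagonal.antidiagonal (n + 1)) fun p _ =>
    ((hM p.1).mul (hM p.2)).const_mul ((n + 1).choose p.1 : ℝ)).div_const 2
  refine (hLeibniz.sub (hM (n + 1))).congr_deriv ?_
  rw [tiltedFlux, Finset.sum_antidiagonal_choose_succ_mul
    (fun i j => tiltedMoment w i x * tiltedMoment w j x), neg_sub, sub_eq_add_neg, neg_neg,
    add_comm, sub_eq_add_neg, ← neg_div, ← Finset.sum_add_distrib, ← Finset.sum_neg_distrib]
  congr 2
  refine Finset.sum_congr rfl fun p hp => ?_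
  rw [Nat.choose_symm_of_eq_add (Finset.HasAntidiagonal.mem_antidiagonal.1 hp).symm]
  ring

lemma abs_tiltedFlux_le (hw : ∀ k, 0 ≤ w k) (hs : Summable w) (hs1 : ∑' k, w k ≤ 1) (n : ℕ)
    (hx : 0 < x) : |tiltedFlux w n x| ≤ (n + 2).factorial / x ^ (n + 1) := by
  set B : ℝ := (n + 1).factorial / x ^ (n + 1) with hB
  have hM (m : ℕ) : tiltedMoment w m x ≤ m.factorial / x ^ m := tiltedMoment_le hw hs hs1 m hx
  have hM0 (m : ℕ) : 0 ≤ tiltedMoment w m x := tiltedMoment_nonneg hw m x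
  have hterm : ∀ p ∈ Finset.HasAntidiagonal.antidiagonal (n + 1),
      ((n + 1).choose p.1 : ℝ) * (tiltedMoment w p.1 x * tiltedMoment w p.2 x) ≤ B := by
    intro p hp
    have hp := Finset.HasAntidiagonal.mem_antidiagonal.1 hp
    calc ((n + 1).choose p.1 : ℝ) * (tiltedMoment w p.1 x * tiltedMoment w p.2 x)
        ≤ (n + 1).choose p.1 * (p.1.factorial / x ^ p.1 * (p.2.factorial / x ^ p.2)) := by
          gcongr
          exacts [hM0 _, hM _, hM _]
      _ = B := by
          rw [hB, ← hp, Nat.choose_symm_add, ← Nat.add_choose_mul_factorial_mul_factorial, pow_add]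
          push_cast
          field_simp
  have hsum := Finset.sum_le_card_nsmul _ _ _ hterm
  have hsum0 : 0 ≤ ∑ p ∈ Finset.HasAntidiagonal.antidiagonal (n + 1),
      ((n + 1).choose p.1 : ℝ) * (tiltedMoment w p.1 x * tiltedMoment w p.2 x) :=
    Finset.sum_nonneg fun p _ => mul_nonneg (by positivity) (mul_nonneg (hM0 _) (hM0 _))
  have hB0 : 0 ≤ B := by positivity
  have hfac : (n + 2).factorial / x ^ (n + 1) = (n + 2) * B := by
    rw [Nat.factorial_succ, hB]
    push_cast
    ring
  rw [Finset.Nat.card_antidiagonal, nsmul_eq_mul] at hsum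
  push_cast at hsum
  rw [hfac, tiltedFlux, abs_le]
  constructor <;> nlinarith [hM (n + 1), hM0 (n + 1), Nat.cast_nonneg (α := ℝ) n]

end TiltedFlux

section RealAnalysis

lemma continuousOn_primitive_of_intervalIntegrable {f : ℝ → ℝ} {a : ℝ} :
    ContinuousOn (fun t => ∫ s in a..t, f s) (Ici a ∩ {t | IntervalIntegrable f volume a t}) := by
  rintro t ⟨hat, ht⟩
  have hcont {b : ℝ} (hab : a ≤ b) (hb : IntervalIntegrable f volume a b) :
      ContinuousOn (fun t => ∫ s in a..t, f s) (Icc a b) :=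
    uIcc_of_le hab ▸ intervalIntegral.continuousOn_primitive_interval' hb left_mem_uIcc
  by_cases hmax : ∃ b, t < b ∧ IntervalIntegrable f volume a b
  · obtain ⟨b, htb, hb⟩ := hmax
    have hab : a ≤ b := hat.trans htb.le
    refine (hcont hab hb t ⟨hat, htb.le⟩).mono_of_mem_nhdsWithin ?_
    exact mem_nhdsWithin.2 ⟨Iio b, isOpen_Iio, htb, fun y hy => ⟨hy.2.1, hy.1.le⟩⟩
  · push Not at hmax
    refine (hcont hat ht t (right_mem_Icc.2 hat)).mono fun y hy => ⟨hy.1, ?_⟩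
    exact le_of_not_gt fun hty => hmax y hty hy.2

/-- Holds even for nonmeasurable `f`: where `f` is not integrable, the primitive takes the junk
value `0`. -/
lemma aestronglyMeasurable_primitive (f : ℝ → ℝ) (a : ℝ) :
    AEStronglyMeasurable (fun t => ∫ s in a..t, f s) (volume.restrict (Ici a)) := by
  classical
  set S := Ici a ∩ {t | IntervalIntegrable f volume a t}
  have hSmeas : MeasurableSet S := by
    refine (ordConnected_iff.2 fun x hx y hy _ z hz => ?_ : OrdConnected S).measurableSet
    have haz : a ≤ z := hx.1.trans hz.1
    exact ⟨haz, hy.2.mono_set (uIcc_subset_uIcc_left (uIcc_of_le (haz.trans hz.2) ▸ ⟨haz, hz.2⟩))⟩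
  have hmeas : Measurable (S.indicator fun t => ∫ s in a..t, f s) := by
    rw [← piecewise_eq_indicator]
    exact continuousOn_primitive_of_intervalIntegrable.measurable_piecewise
      continuousOn_const hSmeas
  refine (aestronglyMeasurable_indicator_iff measurableSet_Ici).1
    (hmeas.aestronglyMeasurable.congr (.of_forall fun t => ?_))
  by_cases hat : t ∈ Ici a
  · by_cases ht : IntervalIntegrable f volume a t
    · rw [indicator_of_mem hat, indicator_of_mem (show t ∈ S from ⟨hat, ht⟩)]
    · rw [indicator_of_mem hat, indicator_of_notMem fun h => ht h.2,
        intervalIntegral.integral_undef ht]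
  · rw [indicator_of_notMem hat, indicator_of_notMem fun h => hat h.1]

lemma aestronglyMeasurable_of_hasDerivAt {α : Type*} [MeasurableSpace α] {μ : Measure α}
    {f : ℝ → α → ℝ} {f' : α → ℝ} {x : ℝ} (hf : ∀ y, x ≤ y → AEStronglyMeasurable (f y) μ)
    (h : ∀ᵐ a ∂μ, HasDerivAt (f · a) (f' a) x) : AEStronglyMeasurable f' μ := by
  obtain ⟨u, -, hu, hlim⟩ := exists_seq_strictAnti_tendsto_nhdsWithin (0 : ℝ)
  have hne : Tendsto u atTop (𝓝[≠] 0) := hlim.mono_right (nhdsWithin_mono _ fun y hy => ne_of_gt hy)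
  refine aestronglyMeasurable_of_tendsto_ae atTop
    (f := fun j a => (u j)⁻¹ • (f (x + u j) a - f x a))
    (fun j => ((hf (x + u j) (by linarith [hu j])).sub (hf x le_rfl)).const_smul (u j)⁻¹) ?_
  filter_upwards [h] with a ha
  exact (hasDerivAt_iff_tendsto_slope_zero.1 ha).comp hne

end RealAnalysis

section Evolution

/-- The integrated Burgers control problem for the weights `w t k = v_{k+1}(t)`, with the transport
term `−V·∂ₓV` written as the flux of order zero. -/
structure IsBurgersFlow (T : ℝ) (w : ℝ → ℕ → ℝ) (r : ℝ → ℝ) : Prop where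
  nonneg : ∀ t ∈ Icc 0 T, ∀ k, 0 ≤ w t k
  summable : ∀ t ∈ Icc 0 T, Summable (w t)
  tsum_le_one : ∀ t ∈ Icc 0 T, ∑' k, w t k ≤ 1
  monotoneOn : MonotoneOn r (Icc 0 T)
  moment_zero_sub : ∀ t ∈ Icc 0 T, ∀ x, 0 < x →
    tiltedMoment (w t) 0 x - tiltedMoment (w 0) 0 x
      = (∫ s in (0)..t, tiltedFlux (w s) 0 x) + Real.exp (-x) * r t

variable {T : ℝ} {w : ℝ → ℕ → ℝ} {r : ℝ → ℝ} {s t x : ℝ}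

lemma genFun_eq_tiltedMoment (v : ℕ → ℝ → ℝ) (t x : ℝ) :
    genFun v t x = tiltedMoment (fun k => v (k + 1) t) 0 x - 1 := by
  simp [genFun, tiltedMoment, tiltedTerm]

lemma deriv_genFun {v : ℕ → ℝ → ℝ} (hv : ∀ k, 0 ≤ v (k + 1) t)
    (hs : Summable fun k => v (k + 1) t) (hx : 0 < x) :
    deriv (genFun v t) x = -tiltedMoment (fun k => v (k + 1) t) 1 x := by
  rw [funext (genFun_eq_tiltedMoment v t)]
  exact ((hasDerivAt_tiltedMoment hv hs 0 hx).sub_const 1).deriv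

lemma IsBurgersSolution.isBurgersFlow {v : ℕ → ℝ → ℝ} (h : IsBurgersSolution T v r) :
    IsBurgersFlow T (fun t k => v (k + 1) t) r := by
  obtain ⟨hv, hs, hs1, hr, -, -, -, hV⟩ := h
  refine ⟨fun t ht k => hv (k + 1) k.succ_pos t ht, hs, hs1, hr, fun t ht x hx => ?_⟩
  have hflux : ∫ s in (0)..t, genFun v s x * deriv (genFun v s) x
      = -∫ s in (0)..t, tiltedFlux (fun k => v (k + 1) s) 0 x := by
    rw [← intervalIntegral.integral_neg]
    refine intervalIntegral.integral_congr fun s hs' => ?_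
    have hsT := Icc_subset_Icc_right ht.2 (uIcc_of_le ht.1 ▸ hs')
    simp only [genFun_eq_tiltedMoment, tiltedFlux_zero,
      deriv_genFun (fun k => hv (k + 1) k.succ_pos s hsT) (hs s hsT) hx]
    ring
  have := hV t ht x hx
  rw [hflux, genFun_eq_tiltedMoment, genFun_eq_tiltedMoment] at this
  linarith

namespace IsBurgersFlow

lemma summable_tiltedTerm (h : IsBurgersFlow T w r) (ht : t ∈ Icc 0 T) (n : ℕ) (hx : 0 < x) :
    Summable (tiltedTerm (w t) n x) :=
  _root_.summable_tiltedTerm (h.nonneg t ht) (h.summable t ht) n hx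

lemma aestronglyMeasurable_tiltedMoment (h : IsBurgersFlow T w r) (n : ℕ) (hx : 0 < x) :
    AEStronglyMeasurable (fun t => tiltedMoment (w t) n x) (volume.restrict (Icc 0 T)) := by
  induction n generalizing x with
  | zero =>
    have hprim := (aestronglyMeasurable_primitive (fun s => tiltedFlux (w s) 0 x) 0).mono_measure
      (Measure.restrict_mono_set volume (Icc_subset_Ici_self (b := 0) (a := T)))
    have hr : AEStronglyMeasurable r (volume.restrict (Icc 0 T)) :=
      (aemeasurable_restrict_of_monotoneOn measurableSet_Icc h.monotoneOn).aestronglyMeasurable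
    refine ((hprim.add (hr.const_mul (Real.exp (-x)))).add_const
      (tiltedMoment (w 0) 0 x)).congr ?_
    filter_upwards [ae_restrict_mem measurableSet_Icc] with t ht
    simp [← h.moment_zero_sub t ht x hx]
  | succ n ih =>
    refine (aestronglyMeasurable_of_hasDerivAt (f := fun y t => -tiltedMoment (w t) n y)
      (x := x) (fun y hy => (ih (hx.trans_le hy)).neg) ?_)
    filter_upwards [ae_restrict_mem measurableSet_Icc] with t ht
    exact (hasDerivAt_tiltedMoment (h.nonneg t ht) (h.summable t ht) n hx).neg.congr_deriv
      (neg_neg _)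

lemma aestronglyMeasurable_tiltedFlux (h : IsBurgersFlow T w r) (n : ℕ) (hx : 0 < x) :
    AEStronglyMeasurable (fun t => tiltedFlux (w t) n x) (volume.restrict (Icc 0 T)) := by
  have hM (m : ℕ) := h.aestronglyMeasurable_tiltedMoment m hx
  simp only [tiltedFlux, div_eq_mul_inv]
  refine AEStronglyMeasurable.sub (.mul_const ?_ _) (hM (n + 1))
  refine Finset.aestronglyMeasurable_fun_sum _ fun p _ => ?_
  exact ((hM p.1).mul (hM p.2)).const_mul _

lemma abs_tiltedFlux_le (h : IsBurgersFlow T w r) (ht : t ∈ Icc 0 T) (n : ℕ) (hx : 0 < x) :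
    |tiltedFlux (w t) n x| ≤ (n + 2).factorial / x ^ (n + 1) :=
  _root_.abs_tiltedFlux_le (h.nonneg t ht) (h.summable t ht) (h.tsum_le_one t ht) n hx

lemma intervalIntegrable_tiltedFlux (h : IsBurgersFlow T w r) (n : ℕ) (hx : 0 < x)
    (hs : s ∈ Icc 0 T) (ht : t ∈ Icc 0 T) :
    IntervalIntegrable (fun τ => tiltedFlux (w τ) n x) volume s t := by
  have hint : IntegrableOn (fun τ => tiltedFlux (w τ) n x) (Icc 0 T) := by
    refine .of_bound measure_Icc_lt_top (h.aestronglyMeasurable_tiltedFlux n hx)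
      ((n + 2).factorial / x ^ (n + 1)) ?_
    filter_upwards [ae_restrict_mem measurableSet_Icc] with τ hτ
    exact h.abs_tiltedFlux_le hτ n hx
  exact (hint.mono_set (ordConnected_Icc.uIcc_subset hs ht)).intervalIntegrable

lemma hasDerivAt_integral_tiltedFlux (h : IsBurgersFlow T w r) (ht : t ∈ Icc 0 T) (n : ℕ)
    (hx : 0 < x) :
    HasDerivAt (fun y => ∫ s in (0)..t, tiltedFlux (w s) n y)
      (∫ s in (0)..t, -tiltedFlux (w s) (n + 1) x) x := by
  have hsub : uIoc 0 t ⊆ Icc 0 T :=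
    uIoc_of_le ht.1 ▸ Ioc_subset_Icc_self.trans (Icc_subset_Icc_right ht.2)
  have hmeas (m : ℕ) {y : ℝ} (hy : 0 < y) :=
    (h.aestronglyMeasurable_tiltedFlux m hy).mono_measure (Measure.restrict_mono_set volume hsub)
  refine (intervalIntegral.hasDerivAt_integral_of_dominated_loc_of_deriv_le
    (F' := fun y s => -tiltedFlux (w s) (n + 1) y)
    (bound := fun _ => (n + 3).factorial / (x / 2) ^ (n + 2)) (Ioi_mem_nhds (half_lt_self hx))
    ?_ (h.intervalIntegrable_tiltedFlux n hx ⟨le_rfl, ht.1.trans ht.2⟩ ht)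
    (hmeas (n + 1) hx).neg (.of_forall fun s hs y hy => ?_) intervalIntegrable_const
    (.of_forall fun s hs y hy => ?_)).2
  · filter_upwards [lt_mem_nhds hx] with y hy using hmeas n hy
  · have hxy : x / 2 < y := hy
    rw [norm_neg]
    exact (h.abs_tiltedFlux_le (hsub hs) (n + 1) (by linarith)).trans (by gcongr)
  · have hxy : x / 2 < y := hy
    exact hasDerivAt_tiltedFlux (h.nonneg s (hsub hs)) (h.summable s (hsub hs)) n (by linarith)

lemma moment_sub_initial (h : IsBurgersFlow T w r) (ht : t ∈ Icc 0 T) (n : ℕ) (hx : 0 < x) :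
    tiltedMoment (w t) n x - tiltedMoment (w 0) n x
      = (∫ s in (0)..t, tiltedFlux (w s) n x) + Real.exp (-x) * r t := by
  induction n generalizing x with
  | zero => exact h.moment_zero_sub t ht x hx
  | succ n ih =>
    have hM {s : ℝ} (hs : s ∈ Icc 0 T) :=
      hasDerivAt_tiltedMoment (h.nonneg s hs) (h.summable s hs) n hx
    have hexp : HasDerivAt (fun y => Real.exp (-y) * r t) (-(Real.exp (-x) * r t)) x :=
      (((hasDerivAt_id x).neg.exp).mul_const (r t)).congr_deriv (by simp)
    have hlhs := ((hM ht).sub (hM ⟨le_rfl, ht.1.trans ht.2⟩)).congr_of_eventuallyEq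
      ((lt_mem_nhds hx).mono fun y hy => (ih hy).symm)
    have := hlhs.unique ((h.hasDerivAt_integral_tiltedFlux ht n hx).add hexp)
    rw [intervalIntegral.integral_neg] at this
    linarith

lemma moment_sub (h : IsBurgersFlow T w r) (hs : s ∈ Icc 0 T) (ht : t ∈ Icc 0 T) (n : ℕ)
    (hx : 0 < x) :
    tiltedMoment (w t) n x - tiltedMoment (w s) n x
      = (∫ τ in s..t, tiltedFlux (w τ) n x) + Real.exp (-x) * (r t - r s) := by
  have h0 : (0 : ℝ) ∈ Icc 0 T := ⟨le_rfl, ht.1.trans ht.2⟩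
  have hadd := intervalIntegral.integral_add_adjacent_intervals
    (h.intervalIntegrable_tiltedFlux n hx h0 hs) (h.intervalIntegrable_tiltedFlux n hx hs ht)
  linarith [h.moment_sub_initial hs n hx, h.moment_sub_initial ht n hx]

end IsBurgersFlow

end Evolution

section BddLip

variable {α ι : Type*} {d : α → α → ℝ} {S : Set α} {f g : α → ℝ}

/-- `f` is bounded and Lipschitz on `S` for the distance-like function `d`; a single constant serves
both bounds. -/
def IsBddLipOn (d : α → α → ℝ) (S : Set α) (f : α → ℝ) : Prop :=
  ∃ C, 0 ≤ C ∧ (∀ p ∈ S, |f p| ≤ C) ∧ ∀ p ∈ S, ∀ q ∈ S, |f p - f q| ≤ C * d p q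

namespace IsBddLipOn

lemma const (hd : ∀ p q, 0 ≤ d p q) (c : ℝ) : IsBddLipOn d S fun _ => c :=
  ⟨|c|, abs_nonneg c, fun _ _ => le_rfl, fun p _ q _ => by
    simpa using mul_nonneg (abs_nonneg c) (hd p q)⟩

lemma add (hf : IsBddLipOn d S f) (hg : IsBddLipOn d S g) :
    IsBddLipOn d S fun p => f p + g p := by
  obtain ⟨A, hA, hfA, hfL⟩ := hf
  obtain ⟨B, hB, hgB, hgL⟩ := hg
  refine ⟨A + B, add_nonneg hA hB, fun p hp => ?_, fun p hp q hq => ?_⟩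
  · exact (abs_add_le _ _).trans (add_le_add (hfA p hp) (hgB p hp))
  · calc |f p + g p - (f q + g q)| = |(f p - f q) + (g p - g q)| := by ring_nf
      _ ≤ A * d p q + B * d p q :=
        (abs_add_le _ _).trans (add_le_add (hfL p hp q hq) (hgL p hp q hq))
      _ = (A + B) * d p q := by ring

lemma mul (hf : IsBddLipOn d S f) (hg : IsBddLipOn d S g) :
    IsBddLipOn d S fun p => f p * g p := by
  obtain ⟨A, hA, hfA, hfL⟩ := hf
  obtain ⟨B, hB, hgB, hgL⟩ := hg
  have hAB := mul_nonneg hA hB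
  refine ⟨2 * (A * B), by positivity, fun p hp => ?_, fun p hp q hq => ?_⟩
  · rw [abs_mul]
    nlinarith [mul_le_mul (hfA p hp) (hgB p hp) (abs_nonneg _) hA]
  · calc |f p * g p - f q * g q| = |f p * (g p - g q) + (f p - f q) * g q| := by ring_nf
      _ ≤ |f p| * |g p - g q| + |f p - f q| * |g q| := by
        simpa only [abs_mul] using abs_add_le (f p * (g p - g q)) ((f p - f q) * g q)
      _ ≤ A * (B * d p q) + A * d p q * B := by
        gcongr
        exacts [hfA p hp, hgL p hp q hq, (abs_nonneg _).trans (hfL p hp q hq), hfL p hp q hq,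
          hgB q hq]
      _ = 2 * (A * B) * d p q := by ring

lemma sub (hd : ∀ p q, 0 ≤ d p q) (hf : IsBddLipOn d S f) (hg : IsBddLipOn d S g) :
    IsBddLipOn d S fun p => f p - g p := by
  simpa [sub_eq_add_neg] using hf.add ((const hd (-1)).mul hg)

lemma sum (hd : ∀ p q, 0 ≤ d p q) {f : ι → α → ℝ} (s : Finset ι)
    (hf : ∀ i, IsBddLipOn d S (f i)) : IsBddLipOn d S fun p => ∑ i ∈ s, f i p := by
  induction s using Finset.cons_induction with
  | empty => simpa using const hd 0
  | cons i s hi ih => simpa using (hf i).add ih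

end IsBddLipOn

end BddLip

section Characteristics

/-- The control `r` may jump; time increments measured by `clock r` dominate those of both `t` and
`r`. -/
def clock (r : ℝ → ℝ) (t : ℝ) : ℝ := t + r t

/-- The space-time distance `|Δx| + |Δ clock|`. -/
def clockDist (r : ℝ → ℝ) (p q : ℝ × ℝ) : ℝ := |clock r p.1 - clock r q.1| + |p.2 - q.2|

/-- The source term of the equation for the moment of order `n` along the characteristics
`ẋ = −(1 − M₀)`. -/
noncomputable def tiltedReaction (w : ℕ → ℝ) (n : ℕ) (x : ℝ) : ℝ :=
  tiltedFlux w n x + (1 - tiltedMoment w 0 x) * tiltedMoment w (n + 1) x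

lemma tiltedReaction_one (w : ℕ → ℝ) (x : ℝ) :
    tiltedReaction w 1 x = tiltedMoment w 1 x ^ 2 := by
  rw [tiltedReaction, tiltedFlux_one]
  ring

lemma tiltedReaction_two (w : ℕ → ℝ) (x : ℝ) :
    tiltedReaction w 2 x = 3 * tiltedMoment w 1 x * tiltedMoment w 2 x := by
  rw [tiltedReaction, tiltedFlux_two]
  ring

lemma clockDist_nonneg (r : ℝ → ℝ) (p q : ℝ × ℝ) : 0 ≤ clockDist r p q := by
  unfold clockDist
  positivity

lemma abs_clock_sub {r : ℝ → ℝ} {S : Set ℝ} (hr : MonotoneOn r S) {s t : ℝ} (hs : s ∈ S)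
    (ht : t ∈ S) : |clock r t - clock r s| = |t - s| + |r t - r s| := by
  unfold clock
  rcases le_total s t with hst | hts
  · have := hr hs ht hst
    rw [abs_of_nonneg (by linarith), abs_of_nonneg (by linarith), abs_of_nonneg (by linarith)]
    ring
  · have := hr ht hs hts
    rw [abs_of_nonpos (by linarith), abs_of_nonpos (by linarith), abs_of_nonpos (by linarith)]
    ring

namespace IsBurgersFlow

variable {T : ℝ} {w : ℝ → ℕ → ℝ} {r : ℝ → ℝ} {a s t x y : ℝ}

lemma tiltedMoment_nonneg (h : IsBurgersFlow T w r) (ht : t ∈ Icc 0 T) (n : ℕ) (x : ℝ) :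
    0 ≤ tiltedMoment (w t) n x :=
  _root_.tiltedMoment_nonneg (h.nonneg t ht) n x

lemma tiltedMoment_le (h : IsBurgersFlow T w r) (ht : t ∈ Icc 0 T) (n : ℕ) (ha : 0 < a)
    (hax : a ≤ x) : tiltedMoment (w t) n x ≤ n.factorial / a ^ n :=
  (_root_.tiltedMoment_le (h.nonneg t ht) (h.summable t ht) (h.tsum_le_one t ht) n
    (ha.trans_le hax)).trans (by gcongr)

lemma tiltedMoment_zero_le_one (h : IsBurgersFlow T w r) (ht : t ∈ Icc 0 T) (hx : 0 < x) :
    tiltedMoment (w t) 0 x ≤ 1 := by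
  simpa using h.tiltedMoment_le ht 0 hx le_rfl

lemma sub_le_clock_sub (h : IsBurgersFlow T w r) (hs : s ∈ Icc 0 T) (ht : t ∈ Icc s T) :
    t - s ≤ clock r t - clock r s := by
  have := h.monotoneOn hs ⟨hs.1.trans ht.1, ht.2⟩ ht.1
  unfold clock
  linarith

lemma tiltedMoment_anti (h : IsBurgersFlow T w r) (ht : t ∈ Icc 0 T) (n : ℕ) (hx : 0 < x)
    (hxy : x ≤ y) : tiltedMoment (w t) n y ≤ tiltedMoment (w t) n x :=
  _root_.tiltedMoment_anti (h.nonneg t ht) (h.summable_tiltedTerm ht n hx) hxy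

lemma abs_moment_sub_time_le (h : IsBurgersFlow T w r) (hs : s ∈ Icc 0 T) (ht : t ∈ Icc 0 T)
    (n : ℕ) (ha : 0 < a) (hax : a ≤ x) :
    |tiltedMoment (w t) n x - tiltedMoment (w s) n x|
      ≤ ((n + 2).factorial / a ^ (n + 1) + 1) * |clock r t - clock r s| := by
  have hx := ha.trans_le hax
  have hflux : |∫ τ in s..t, tiltedFlux (w τ) n x|
      ≤ (n + 2).factorial / a ^ (n + 1) * |t - s| := by
    refine intervalIntegral.norm_integral_le_of_norm_le_const
      (f := fun τ => tiltedFlux (w τ) n x) fun τ hτ => ?_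
    have hτT := ordConnected_Icc.uIcc_subset hs ht (uIoc_subset_uIcc hτ)
    exact (h.abs_tiltedFlux_le hτT n hx).trans (by gcongr)
  have hexp : |Real.exp (-x) * (r t - r s)| ≤ |r t - r s| := by
    rw [abs_mul, Real.abs_exp]
    exact mul_le_of_le_one_left (abs_nonneg _) (Real.exp_le_one_iff.2 (by linarith))
  have hK : (0 : ℝ) ≤ (n + 2).factorial / a ^ (n + 1) := by positivity
  rw [h.moment_sub hs ht n hx, abs_clock_sub h.monotoneOn hs ht]
  refine (abs_add_le _ _).trans ((add_le_add hflux hexp).trans ?_)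
  nlinarith [mul_nonneg hK (abs_nonneg (r t - r s)), abs_nonneg (t - s)]

lemma abs_moment_sub_space_le (h : IsBurgersFlow T w r) (ht : t ∈ Icc 0 T) (n : ℕ) (ha : 0 < a)
    (hax : a ≤ x) (hay : a ≤ y) :
    |tiltedMoment (w t) n x - tiltedMoment (w t) n y|
      ≤ (n + 1).factorial / a ^ (n + 1) * |x - y| := by
  wlog hxy : x ≤ y generalizing x y
  · rw [abs_sub_comm, abs_sub_comm x]
    exact this hay hax (le_of_not_ge hxy)
  have hLip := abs_tiltedMoment_sub_le (h.nonneg t ht)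
    (h.summable_tiltedTerm ht (n + 1) (ha.trans_le hax)) hxy
  rw [abs_sub_comm, abs_sub_comm x, abs_of_nonneg (sub_nonneg.2 hxy)]
  exact hLip.trans (mul_le_mul_of_nonneg_right (h.tiltedMoment_le ht (n + 1) ha hax)
    (sub_nonneg.2 hxy))

lemma isBddLipOn_tiltedMoment (h : IsBurgersFlow T w r) (n : ℕ) (ha : 0 < a) :
    IsBddLipOn (clockDist r) (Icc 0 T ×ˢ Ici a) fun p => tiltedMoment (w p.1) n p.2 := by
  set A : ℝ := n.factorial / a ^ n
  set B : ℝ := (n + 2).factorial / a ^ (n + 1) + 1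
  set D : ℝ := (n + 1).factorial / a ^ (n + 1)
  have hA : 0 ≤ A := by positivity
  have hB : 0 ≤ B := by positivity
  have hD : 0 ≤ D := by positivity
  refine ⟨A + B + D, by positivity, ?_, ?_⟩
  · rintro ⟨t, x⟩ ⟨ht, hx⟩
    rw [abs_of_nonneg (h.tiltedMoment_nonneg ht n x)]
    linarith [h.tiltedMoment_le ht n ha hx]
  · rintro ⟨t, x⟩ ⟨ht, hx⟩ ⟨s, y⟩ ⟨hs, hy⟩
    simp only [clockDist]
    have htime := h.abs_moment_sub_time_le hs ht n ha hx
    have hspace := h.abs_moment_sub_space_le hs n ha hx hy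
    calc |tiltedMoment (w t) n x - tiltedMoment (w s) n y|
        ≤ B * |clock r t - clock r s| + D * |x - y| :=
          (abs_sub_le _ (tiltedMoment (w s) n x) _).trans (add_le_add htime hspace)
      _ ≤ (A + B + D) * (|clock r t - clock r s| + |x - y|) := by
          rw [mul_add]
          gcongr <;> linarith

lemma isBddLipOn_tiltedFlux (h : IsBurgersFlow T w r) (n : ℕ) (ha : 0 < a) :
    IsBddLipOn (clockDist r) (Icc 0 T ×ˢ Ici a) fun p => tiltedFlux (w p.1) n p.2 := by
  have hd := clockDist_nonneg r
  have hM (m : ℕ) := h.isBddLipOn_tiltedMoment m ha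
  have hsum := IsBddLipOn.sum hd (Finset.HasAntidiagonal.antidiagonal (n + 1)) fun i =>
    (IsBddLipOn.const hd ((n + 1).choose i.1 : ℝ)).mul ((hM i.1).mul (hM i.2))
  exact (hsum.mul (IsBddLipOn.const hd 2⁻¹)).sub hd (hM (n + 1))

lemma isBddLipOn_tiltedReaction (h : IsBurgersFlow T w r) (n : ℕ) (ha : 0 < a) :
    IsBddLipOn (clockDist r) (Icc 0 T ×ˢ Ici a) fun p => tiltedReaction (w p.1) n p.2 := by
  have hd := clockDist_nonneg r
  exact (h.isBddLipOn_tiltedFlux n ha).add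
    (((IsBddLipOn.const hd 1).sub hd (h.isBddLipOn_tiltedMoment 0 ha)).mul
      (h.isBddLipOn_tiltedMoment (n + 1) ha))

lemma exists_abs_integral_tiltedFlux_sub_le (h : IsBurgersFlow T w r) (n : ℕ) (ha : 0 < a) :
    ∃ C, 0 ≤ C ∧ ∀ s ∈ Icc 0 T, ∀ t ∈ Icc s T, ∀ x, a ≤ x →
      |(∫ τ in s..t, tiltedFlux (w τ) n x) - (t - s) * tiltedFlux (w s) n x|
        ≤ C * (t - s) * (clock r t - clock r s) := by
  obtain ⟨C, hC, -, hLip⟩ := h.isBddLipOn_tiltedFlux n ha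
  refine ⟨C, hC, fun s hs t ⟨hst, htT⟩ x hx => ?_⟩
  have ht : t ∈ Icc 0 T := ⟨hs.1.trans hst, htT⟩
  have hint := h.intervalIntegrable_tiltedFlux n (ha.trans_le hx) hs ht
  have hconst : (t - s) * tiltedFlux (w s) n x = ∫ _ in s..t, tiltedFlux (w s) n x := by simp
  rw [hconst, ← intervalIntegral.integral_sub hint intervalIntegrable_const]
  refine (intervalIntegral.norm_integral_le_of_norm_le_const
    (f := fun τ => tiltedFlux (w τ) n x - tiltedFlux (w s) n x)
    (C := C * (clock r t - clock r s)) fun τ hτ => ?_).trans_eq ?_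
  · obtain ⟨hsτ, hτt⟩ := uIoc_of_le hst ▸ hτ
    have hτT : τ ∈ Icc 0 T := ⟨hs.1.trans hsτ.le, hτt.trans htT⟩
    refine (hLip (τ, x) ⟨hτT, hx⟩ (s, x) ⟨hs, hx⟩).trans ?_
    have hrs := h.monotoneOn hs hτT hsτ.le
    have hrt := h.monotoneOn hτT ht hτt
    simp only [clockDist, clock, sub_self, abs_zero, add_zero]
    rw [abs_of_nonneg (by linarith)]
    gcongr
  · rw [abs_of_nonneg (sub_nonneg.2 hst)]
    ring

/-- An explicit Euler step along a characteristic: its error is of second order even across jumps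
of `r`, which enter exactly. -/
lemma exists_abs_moment_sub_characteristic_le (h : IsBurgersFlow T w r) (n : ℕ) (ha : 0 < a) :
    ∃ C, 0 ≤ C ∧ ∀ s ∈ Icc 0 T, ∀ t ∈ Icc s T, ∀ x, a ≤ x → ∀ y,
      y = x + (t - s) * (1 - tiltedMoment (w s) 0 x) →
      |tiltedMoment (w t) n x - (tiltedMoment (w s) n y + (t - s) * tiltedReaction (w s) n y
        + Real.exp (-x) * (r t - r s))| ≤ C * (t - s) * (clock r t - clock r s) := by
  obtain ⟨C, hC, hflux⟩ := h.exists_abs_integral_tiltedFlux_sub_le n ha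
  obtain ⟨D, hD, -, hreac⟩ := h.isBddLipOn_tiltedReaction n ha
  set K : ℝ := (n + 2).factorial / a ^ (n + 2)
  have hK : 0 ≤ K := by positivity
  refine ⟨C + D + K, by positivity, fun s hs t ht x hx y hy => ?_⟩
  have hx0 := ha.trans_le hx
  have hδ : 0 ≤ t - s := sub_nonneg.2 ht.1
  have htT : t ∈ Icc 0 T := ⟨hs.1.trans ht.1, ht.2⟩
  have hΔ := h.sub_le_clock_sub hs ht
  have hM0 := h.tiltedMoment_nonneg hs 0 x
  have hM1 := h.tiltedMoment_zero_le_one hs hx0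
  have hyx : 0 ≤ y - x := by nlinarith
  have hyx' : y - x ≤ t - s := by nlinarith
  have htan : |tiltedMoment (w s) n y
      - (tiltedMoment (w s) n x - (y - x) * tiltedMoment (w s) (n + 1) x)|
      ≤ K * (t - s) * (clock r t - clock r s) := by
    refine (abs_tiltedMoment_sub_tangent_le (h.nonneg s hs) (h.summable s hs) n hx0
      (sub_nonneg.1 hyx)).trans ?_
    rw [pow_two, mul_assoc]
    exact mul_le_mul (h.tiltedMoment_le hs (n + 2) ha hx)
      (mul_le_mul hyx' (hyx'.trans hΔ) hyx hδ) (by positivity) hK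
  have hreac' : |(t - s) * (tiltedReaction (w s) n y - tiltedReaction (w s) n x)|
      ≤ D * (t - s) * (clock r t - clock r s) := by
    have := hreac (s, y) ⟨hs, (hx.trans (sub_nonneg.1 hyx))⟩ (s, x) ⟨hs, hx⟩
    simp only [clockDist, sub_self, abs_zero, zero_add, abs_of_nonneg hyx] at this
    rw [abs_mul, abs_of_nonneg hδ, mul_comm D, mul_assoc]
    exact mul_le_mul_of_nonneg_left
      (this.trans (mul_le_mul_of_nonneg_left (hyx'.trans hΔ) hD)) hδ
  have hsplit : tiltedMoment (w t) n x - (tiltedMoment (w s) n y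
        + (t - s) * tiltedReaction (w s) n y + Real.exp (-x) * (r t - r s))
      = ((∫ τ in s..t, tiltedFlux (w τ) n x) - (t - s) * tiltedFlux (w s) n x)
        - (tiltedMoment (w s) n y
          - (tiltedMoment (w s) n x - (y - x) * tiltedMoment (w s) (n + 1) x))
        - (t - s) * (tiltedReaction (w s) n y - tiltedReaction (w s) n x) := by
    rw [tiltedReaction.eq_def _ _ x]
    linear_combination h.moment_sub hs htT n hx0 + tiltedMoment (w s) (n + 1) x * hy
  rw [hsplit]
  calc _ ≤ _ := (abs_sub _ _).trans (add_le_add ((abs_sub _ _).trans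
        (add_le_add (hflux s hs t ht x hx) htan)) hreac')
    _ = (C + D + K) * (t - s) * (clock r t - clock r s) := by ring

end IsBurgersFlow

end Characteristics

section Subdivision

lemma le_add_of_step_le {α : Type*} {S : ℝ → Set α} {φ : ℝ → α → ℝ} {ρ : ℝ → ℝ} {s t C B : ℝ}
    (hst : s ≤ t)
    (hstep : ∀ τ ∈ Icc s t, ∀ τ' ∈ Icc τ t, ∀ y ∈ S τ', ∃ z ∈ S τ,
      φ τ' y ≤ φ τ z + C * (τ' - τ) * (ρ τ' - ρ τ))
    (hinit : ∀ z ∈ S s, φ s z ≤ B) (N : ℕ) :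
    ∀ y ∈ S t, φ t y ≤ B + C * (t - s) * (ρ t - ρ s) * (1 / ((N : ℝ) + 1)) := by
  set d := (t - s) / ((N : ℝ) + 1) with hd
  have hN : (0 : ℝ) < N + 1 := by positivity
  have hd0 : 0 ≤ d := div_nonneg (sub_nonneg.2 hst) hN.le
  have hNd : ((N : ℝ) + 1) * d = t - s := by rw [hd]; field_simp
  have hind : ∀ i ≤ N + 1, ∀ y ∈ S (s + i * d),
      φ (s + i * d) y ≤ B + C * d * (ρ (s + i * d) - ρ s) := by
    intro i hi
    induction i with
    | zero => simpa using hinit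
    | succ i ih =>
      intro y hy
      have hiN : (i : ℝ) + 1 ≤ N + 1 := by exact_mod_cast hi
      have hτ : s + i * d ∈ Icc s t := ⟨by nlinarith [Nat.cast_nonneg (α := ℝ) i], by nlinarith⟩
      have hτ' : s + (i + 1 : ℕ) * d ∈ Icc (s + i * d) t := by
        push_cast
        constructor <;> nlinarith
      obtain ⟨z, hz, hyz⟩ := hstep _ hτ _ hτ' y hy
      have hdiff : s + (i + 1 : ℕ) * d - (s + i * d) = d := by push_cast; ring
      rw [hdiff] at hyz
      linarith [ih (by omega) z hz]
  have hend : s + (N + 1 : ℕ) * d = t := by push_cast; linarith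
  intro y hy
  refine (hend ▸ hind (N + 1) le_rfl y (hend.symm ▸ hy)).trans_eq ?_
  rw [hd]
  ring

/-- Errors of second order disappear on refining the subdivision, even if `ρ` jumps. -/
lemma le_of_step_le {α : Type*} {S : ℝ → Set α} {φ : ℝ → α → ℝ} {ρ : ℝ → ℝ} {s t C B : ℝ}
    (hst : s ≤ t)
    (hstep : ∀ τ ∈ Icc s t, ∀ τ' ∈ Icc τ t, ∀ y ∈ S τ', ∃ z ∈ S τ,
      φ τ' y ≤ φ τ z + C * (τ' - τ) * (ρ τ' - ρ τ))
    (hinit : ∀ z ∈ S s, φ s z ≤ B) : ∀ y ∈ S t, φ t y ≤ B := by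
  intro y hy
  have hlim : Tendsto (fun N : ℕ => B + C * (t - s) * (ρ t - ρ s) * (1 / ((N : ℝ) + 1))) atTop
      (𝓝 (B + C * (t - s) * (ρ t - ρ s) * 0)) :=
    (tendsto_one_div_add_atTop_nhds_zero_nat.const_mul _).const_add B
  simpa using ge_of_tendsto' hlim fun N => le_add_of_step_le hst hstep hinit N y hy

lemma antitone_of_step_le {φ ρ : ℝ → ℝ} {s t C : ℝ} (hst : s ≤ t)
    (hstep : ∀ τ ∈ Icc s t, ∀ τ' ∈ Icc τ t, φ τ' ≤ φ τ + C * (τ' - τ) * (ρ τ' - ρ τ)) :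
    φ t ≤ φ s :=
  le_of_step_le (S := fun _ => univ) (φ := fun τ (_ : Unit) => φ τ) hst
    (fun τ hτ τ' hτ' _ _ => ⟨(), trivial, hstep τ hτ τ' hτ'⟩) (fun _ _ => le_rfl) () trivial

lemma backward_induction {P : ℝ → Prop} {t d : ℝ} (hd : 0 < d) (ht : P t)
    (hstep : ∀ s ∈ Icc 0 t, P s → ∀ s' ∈ Icc 0 s, s - d ≤ s' → P s') : ∀ s ∈ Icc 0 t, P s := by
  have hind : ∀ (n : ℕ), ∀ s ∈ Icc 0 t, t - n * d ≤ s → P s := by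
    intro n
    induction n with
    | zero =>
      intro s hs hns
      rwa [le_antisymm hs.2 (by simpa using hns)]
    | succ n ih =>
      intro s hs hns
      push_cast at hns
      have hle : s ≤ min t (s + d) := le_min hs.2 (by linarith)
      have hmem : min t (s + d) ∈ Icc 0 t := ⟨hs.1.trans hle, min_le_left _ _⟩
      refine hstep _ hmem (ih _ hmem (le_min ?_ (by linarith))) s ⟨hs.1, hle⟩ ?_
      · nlinarith [Nat.cast_nonneg (α := ℝ) n]
      · linarith [min_le_right t (s + d)]
  intro s hs
  obtain ⟨n, hn⟩ := exists_nat_ge ((t - s) / d)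
  exact hind n s hs (by linarith [(div_le_iff₀ hd).1 hn])

end Subdivision

section Riccati

lemma riccati_step_le {q q' δ Δ C K : ℝ} (hq : 0 < q) (hqq' : q ≤ q') (hK : q' ≤ K) (hC : 0 ≤ C)
    (hδ : 0 ≤ δ) (hδΔ : δ ≤ Δ) (hstep : q + δ * q ^ 2 - C * δ * Δ ≤ q') :
    δ * (q * q') - (q' - q) ≤ (K ^ 3 + C) * (δ * Δ) := by
  have hqK := hqq'.trans hK
  have hK0 : 0 < K := hq.trans_le hqK
  have hδδ : δ * δ ≤ δ * Δ := mul_le_mul_of_nonneg_left hδΔ hδ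
  have hCδ : 0 ≤ C * (δ * Δ) := mul_nonneg hC ((mul_nonneg hδ hδ).trans hδδ)
  rcases le_total (δ * q) 1 with hsmall | hlarge
  · calc δ * (q * q') - (q' - q) = δ * q ^ 2 - (1 - δ * q) * (q' - q) := by ring
      _ ≤ δ * q ^ 2 - (1 - δ * q) * (δ * q ^ 2 - C * δ * Δ) := by
        have := mul_le_mul_of_nonneg_left (by linarith : δ * q ^ 2 - C * δ * Δ ≤ q' - q)
          (sub_nonneg.2 hsmall)
        linarith
      _ = q ^ 3 * (δ * δ) + (1 - δ * q) * (C * (δ * Δ)) := by ring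
      _ ≤ K ^ 3 * (δ * Δ) + 1 * (C * (δ * Δ)) := by
        gcongr
        linarith [mul_nonneg hδ hq.le]
      _ = (K ^ 3 + C) * (δ * Δ) := by ring
  · have hKΔ : 1 ≤ K * Δ := by nlinarith
    calc δ * (q * q') - (q' - q) ≤ δ * (K * K) * 1 := by
          have := mul_le_mul hqK hK (hq.le.trans hqq') hK0.le
          nlinarith
      _ ≤ δ * (K * K) * (K * Δ) := by gcongr
      _ ≤ (K ^ 3 + C) * (δ * Δ) := by nlinarith

/-- The hypothesis is the Euler step of `g' ≥ g²`, whose solutions have `1/g + t` nonincreasing. -/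
lemma inv_le_inv_sub_of_riccati_step {g ρ : ℝ → ℝ} {s t C K : ℝ} (hst : s ≤ t) (hC : 0 ≤ C)
    (hpos : ∀ τ ∈ Icc s t, 0 < g τ) (hK : ∀ τ ∈ Icc s t, g τ ≤ K)
    (hρ : ∀ τ ∈ Icc s t, ∀ τ' ∈ Icc τ t, τ' - τ ≤ ρ τ' - ρ τ)
    (hstep : ∀ τ ∈ Icc s t, ∀ τ' ∈ Icc τ t,
      g τ + (τ' - τ) * g τ ^ 2 - C * (τ' - τ) * (ρ τ' - ρ τ) ≤ g τ') :
    g s ≤ g t ∧ (g t)⁻¹ ≤ (g s)⁻¹ - (t - s) := by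
  have hmem {τ τ' : ℝ} (hτ : τ ∈ Icc s t) (hτ' : τ' ∈ Icc τ t) : τ' ∈ Icc s t :=
    ⟨hτ.1.trans hτ'.1, hτ'.2⟩
  have hmono : ∀ τ ∈ Icc s t, ∀ τ' ∈ Icc τ t, g τ ≤ g τ' := by
    intro τ hτ τ' hτ'
    refine neg_le_neg_iff.1 (antitone_of_step_le (φ := fun σ => -g σ) (ρ := ρ) (C := C) hτ'.1
      fun σ hσ σ' hσ' => ?_)
    have hσs := hmem hτ ⟨hσ.1, hσ.2.trans hτ'.2⟩
    have := hstep σ hσs σ' ⟨hσ'.1, hσ'.2.trans hτ'.2⟩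
    nlinarith [mul_nonneg (sub_nonneg.2 hσ'.1) (sq_nonneg (g σ))]
  have hs : s ∈ Icc s t := left_mem_Icc.2 hst
  refine ⟨hmono s hs t (right_mem_Icc.2 hst), ?_⟩
  have hanti : t + (g t)⁻¹ ≤ s + (g s)⁻¹ := by
    refine antitone_of_step_le (φ := fun τ => τ + (g τ)⁻¹) (ρ := ρ)
      (C := (K ^ 3 + C) / g s ^ 2) hst fun τ hτ τ' hτ' => ?_
    have hτ'' := hmem hτ hτ'
    have hq := hpos τ hτ
    have hq' := hpos τ' hτ''
    have hδΔ := hρ τ hτ τ' hτ'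
    have hδ : 0 ≤ τ' - τ := sub_nonneg.2 hτ'.1
    have hkey := riccati_step_le hq (hmono τ hτ τ' hτ') (hK τ' hτ'') hC hδ hδΔ (hstep τ hτ τ' hτ')
    have hK0 : 0 < K := hq'.trans_le (hK τ' hτ'')
    have hc : g s ^ 2 ≤ g τ * g τ' := by
      rw [pow_two]
      exact mul_le_mul (hmono s hs τ hτ) (hmono s hs τ' hτ'') (hpos s hs).le hq.le
    calc τ' + (g τ')⁻¹
        = τ + (g τ)⁻¹ + ((τ' - τ) * (g τ * g τ') - (g τ' - g τ)) / (g τ * g τ') := by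
          field_simp
          ring
      _ ≤ τ + (g τ)⁻¹ + (K ^ 3 + C) * ((τ' - τ) * (ρ τ' - ρ τ)) / g s ^ 2 := by
          have hnum : 0 ≤ (K ^ 3 + C) * ((τ' - τ) * (ρ τ' - ρ τ)) :=
            mul_nonneg (by positivity) (mul_nonneg hδ (hδ.trans hδΔ))
          have := hpos s hs
          gcongr
      _ = τ + (g τ)⁻¹ + (K ^ 3 + C) / g s ^ 2 * (τ' - τ) * (ρ τ' - ρ τ) := by ring
  linarith

end Riccati

section Barriers

/-- A conservative solution of the Burgers control problem: its total mass is always one. -/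
structure IsCriticalBurgersFlow (T : ℝ) (w : ℝ → ℕ → ℝ) (r : ℝ → ℝ) : Prop
    extends IsBurgersFlow T w r where
  hasSum_one : ∀ t ∈ Icc 0 T, HasSum (w t) 1

namespace IsCriticalBurgersFlow

variable {T : ℝ} {w : ℝ → ℕ → ℝ} {r : ℝ → ℝ} {a s t x L : ℝ} {Φ : ℝ → ℝ}

lemma tiltedMoment_pos (h : IsCriticalBurgersFlow T w r) (ht : t ∈ Icc 0 T) (n : ℕ) (hx : 0 < x) :
    0 < tiltedMoment (w t) n x := by
  obtain ⟨k, hk⟩ : ∃ k, 0 < w t k := by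
    by_contra! hnonpos
    exact not_lt.2 ((h.hasSum_one t ht).nonpos hnonpos) one_pos
  exact _root_.tiltedMoment_pos (h.nonneg t ht) (h.summable_tiltedTerm ht n hx) hk

/-- Along a curve that lies beyond the backward characteristics, `M₁` solves `g' ≥ g²`. -/
lemma inv_moment_le_of_barrier (h : IsCriticalBurgersFlow T w r) (hs : s ∈ Icc 0 T)
    (ht : t ∈ Icc s T) (ha : 0 < a) (haΦ : ∀ τ ∈ Icc s t, a ≤ Φ τ)
    (hΦ : ∀ τ ∈ Icc s t, ∀ τ' ∈ Icc τ t,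
      Φ τ' + (τ' - τ) * (1 - tiltedMoment (w τ) 0 (Φ τ')) ≤ Φ τ) :
    tiltedMoment (w s) 1 (Φ s) ≤ tiltedMoment (w t) 1 (Φ t) ∧
      (tiltedMoment (w t) 1 (Φ t))⁻¹ ≤ (tiltedMoment (w s) 1 (Φ s))⁻¹ - (t - s) := by
  obtain ⟨C, hC, hstep⟩ := h.exists_abs_moment_sub_characteristic_le 1 ha
  have hT {τ : ℝ} (hτ : τ ∈ Icc s t) : τ ∈ Icc 0 T := ⟨hs.1.trans hτ.1, hτ.2.trans ht.2⟩
  have hT' {τ τ' : ℝ} (hτ' : τ' ∈ Icc τ t) : τ' ∈ Icc τ T := ⟨hτ'.1, hτ'.2.trans ht.2⟩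
  refine inv_le_inv_sub_of_riccati_step (g := fun τ => tiltedMoment (w τ) 1 (Φ τ)) ht.1 hC
    (fun τ hτ => h.tiltedMoment_pos (hT hτ) 1 (ha.trans_le (haΦ τ hτ)))
    (fun τ hτ => h.tiltedMoment_le (hT hτ) 1 ha (haΦ τ hτ))
    (fun τ hτ τ' hτ' => h.sub_le_clock_sub (hT hτ) (hT' hτ')) fun τ hτ τ' hτ' => ?_
  have hτ'' : τ' ∈ Icc s t := ⟨hτ.1.trans hτ'.1, hτ'.2⟩
  have hδ : 0 ≤ τ' - τ := sub_nonneg.2 hτ'.1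
  have hx := haΦ τ' hτ''
  have hx0 := ha.trans_le hx
  have hr := mul_nonneg (Real.exp_pos (-Φ τ')).le
    (sub_nonneg.2 (h.monotoneOn (hT hτ) (hT hτ'') hτ'.1))
  have heuler := (abs_sub_le_iff.1 (hstep τ (hT hτ) τ' (hT' hτ') (Φ τ') hx _ rfl)).2
  have hM0 := h.tiltedMoment_zero_le_one (hT hτ) hx0
  have hmono := h.tiltedMoment_anti (hT hτ) 1
    (hx0.trans_le (le_add_of_nonneg_right (mul_nonneg hδ (sub_nonneg.2 hM0)))) (hΦ τ hτ τ' hτ')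
  have hsq := mul_le_mul_of_nonneg_left
    (pow_le_pow_left₀ (h.tiltedMoment_nonneg (hT hτ) 1 _) hmono 2) hδ
  rw [tiltedReaction_one] at heuler
  linarith

lemma moment_one_shift_le (h : IsCriticalBurgersFlow T w r) (hs : s ∈ Icc 0 T) (ht : t ∈ Icc s T)
    (hx : 0 < x) : tiltedMoment (w s) 1 (x + (t - s)) ≤ tiltedMoment (w t) 1 x := by
  have := (h.inv_moment_le_of_barrier (Φ := fun τ => x + (t - τ)) hs ht hx
    (fun τ hτ => by linarith [hτ.2]) fun τ hτ τ' hτ' => ?_).1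
  · simpa using this
  · have := h.tiltedMoment_nonneg ⟨hs.1.trans hτ.1, hτ.2.trans ht.2⟩ 0 (x + (t - τ'))
    nlinarith [hτ'.1]

lemma inv_moment_le_of_moment_le (h : IsCriticalBurgersFlow T w r) (hs : s ∈ Icc 0 T)
    (ht : t ∈ Icc s T) (hx : 0 < x) (hL : ∀ τ ∈ Icc s t, ∀ z, 0 < z → tiltedMoment (w τ) 1 z ≤ L) :
    tiltedMoment (w s) 1 (x * Real.exp (L * (t - s))) ≤ tiltedMoment (w t) 1 x ∧
      (tiltedMoment (w t) 1 x)⁻¹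
        ≤ (tiltedMoment (w s) 1 (x * Real.exp (L * (t - s))))⁻¹ - (t - s) := by
  have hL0 : 0 ≤ L := (h.tiltedMoment_nonneg hs 1 x).trans (hL s (left_mem_Icc.2 ht.1) x hx)
  have hbarrier := h.inv_moment_le_of_barrier (Φ := fun τ => x * Real.exp (L * (t - τ))) hs ht hx
    (fun τ hτ => le_mul_of_one_le_right hx.le
      (Real.one_le_exp (mul_nonneg hL0 (sub_nonneg.2 hτ.2)))) fun τ hτ τ' hτ' => ?_
  · simpa using hbarrier
  · set z := x * Real.exp (L * (t - τ')) with hz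
    have hz0 : 0 < z := by positivity
    have hτT : τ ∈ Icc 0 T := ⟨hs.1.trans hτ.1, hτ.2.trans ht.2⟩
    have hM0 := one_sub_tiltedMoment_zero_le (h.nonneg τ hτT) (h.hasSum_one τ hτT) hz0
      fun y hy _ => hL τ hτ y hy
    calc z + (τ' - τ) * (1 - tiltedMoment (w τ) 0 z) ≤ z + (τ' - τ) * (L * z) := by
          gcongr
          exact sub_nonneg.2 hτ'.1
      _ = z * (L * (τ' - τ) + 1) := by ring
      _ ≤ z * Real.exp (L * (τ' - τ)) := by
          gcongr
          exact Real.add_one_le_exp _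
      _ = x * Real.exp (L * (t - τ)) := by
          rw [hz, mul_assoc, ← Real.exp_add]
          ring_nf

end IsCriticalBurgersFlow

end Barriers

section MomentRatio

/-- The Euler step of `q' = q² + e`, `p' = 3qp + e` does not increase `p / q³` beyond `m`, since
`(m q³)' = 3mq⁴ + 3mq²e` and `3mq² ≥ 1`. -/
lemma ratio_step_le {c q p h e ε m K A Q P : ℝ} (hc : 0 < c) (hcq : c ≤ q) (hcQ : c ≤ Q)
    (hm : 1 ≤ 3 * m * c ^ 2) (hmK : m ≤ K) (hp : p ≤ m * q ^ 3) (hh : 0 ≤ h) (he : 0 ≤ e)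
    (hε : 0 ≤ ε) (hA : q + h * q ^ 2 + e ≤ A) (hQ : q + h * q ^ 2 + e - ε ≤ Q)
    (hP : P ≤ p + h * (3 * q * p) + e + ε) :
    P / Q ^ 3 ≤ m + (1 + 3 * K * A ^ 2) / c ^ 3 * ε := by
  have hq : 0 < q := hc.trans_le hcq
  have hQ0 : 0 < Q := hc.trans_le hcQ
  have hm0 : 0 < m := by
    by_contra! hm0
    nlinarith [sq_nonneg c]
  have hK0 : 0 < K := hm0.trans_le hmK
  set B := q + h * q ^ 2 + e with hB
  have hqB : q ≤ B := by nlinarith [mul_nonneg hh (sq_nonneg q)]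
  have hB0 : 0 < B := hq.trans_le hqB
  have htangent {a b : ℝ} (ha : 0 ≤ a) (hb : 0 ≤ b) : a ^ 3 + 3 * a ^ 2 * (b - a) ≤ b ^ 3 := by
    nlinarith [mul_nonneg (sq_nonneg (b - a)) (by positivity : 0 ≤ b + 2 * a)]
  have hmq : 1 ≤ 3 * m * q ^ 2 := hm.trans (by gcongr)
  have hmain : P ≤ m * Q ^ 3 + (1 + 3 * K * A ^ 2) * ε :=
    calc P ≤ p + h * (3 * q * p) + e + ε := hP
      _ ≤ m * q ^ 3 + h * (3 * q * (m * q ^ 3)) + 3 * m * q ^ 2 * e + ε := by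
          gcongr
          exact le_mul_of_one_le_left he hmq
      _ = m * (q ^ 3 + 3 * q ^ 2 * (B - q)) + ε := by rw [hB]; ring
      _ ≤ m * B ^ 3 + ε := by
          gcongr
          exact htangent hq.le hB0.le
      _ = m * (B ^ 3 + 3 * B ^ 2 * ((B - ε) - B)) + (1 + 3 * m * B ^ 2) * ε := by ring
      _ ≤ m * Q ^ 3 + (1 + 3 * K * A ^ 2) * ε := by
          gcongr
          refine le_trans ?_ (htangent hB0.le hQ0.le)
          gcongr
  calc P / Q ^ 3 ≤ (m * Q ^ 3 + (1 + 3 * K * A ^ 2) * ε) / Q ^ 3 := by gcongr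
    _ = m + (1 + 3 * K * A ^ 2) / Q ^ 3 * ε := by field_simp
    _ ≤ m + (1 + 3 * K * A ^ 2) / c ^ 3 * ε := by gcongr

namespace IsCriticalBurgersFlow

variable {T : ℝ} {w : ℝ → ℕ → ℝ} {r : ℝ → ℝ} {b c t x M : ℝ}

lemma exists_moment_ratio_step_le (h : IsCriticalBurgersFlow T w r) (hx : 0 < x) (hc : 0 < c)
    (hM : 1 ≤ 3 * M * c ^ 2) :
    ∃ C, ∀ s ∈ Icc 0 T, ∀ t ∈ Icc s T, ∀ y, x ≤ y → ∀ z, x ≤ z →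
      z = y + (t - s) * (1 - tiltedMoment (w s) 0 y) →
      c ≤ tiltedMoment (w s) 1 z → c ≤ tiltedMoment (w t) 1 y →
      max (tiltedMoment (w t) 2 y / tiltedMoment (w t) 1 y ^ 3) M
        ≤ max (tiltedMoment (w s) 2 z / tiltedMoment (w s) 1 z ^ 3) M
          + C * (t - s) * (clock r t - clock r s) := by
  obtain ⟨C₁, hC₁, hstep₁⟩ := h.exists_abs_moment_sub_characteristic_le 1 hx
  obtain ⟨C₂, hC₂, hstep₂⟩ := h.exists_abs_moment_sub_characteristic_le 2 hx
  set K₁ := (Nat.factorial 1 : ℝ) / x ^ 1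
  set K₂ := (Nat.factorial 2 : ℝ) / x ^ 2
  set A := K₁ + T * K₁ ^ 2 + (r T - r 0)
  set K := max (K₂ / c ^ 3) M
  have : 0 ≤ K := le_max_of_le_left (by positivity)
  refine ⟨(1 + 3 * K * A ^ 2) / c ^ 3 * (C₁ + C₂), fun s hs t ht y hy z hzx hz hqs hqt => ?_⟩
  have htT : t ∈ Icc 0 T := ⟨hs.1.trans ht.1, ht.2⟩
  have hT : 0 ≤ T := hs.1.trans hs.2
  have hδ : 0 ≤ t - s := sub_nonneg.2 ht.1
  have hδT : t - s ≤ T := by linarith [hs.1, ht.2]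
  have hΔ : 0 ≤ clock r t - clock r s := hδ.trans (h.sub_le_clock_sub hs ht)
  have hr : 0 ≤ r t - r s := sub_nonneg.2 (h.monotoneOn hs htT ht.1)
  have hrT : r t - r s ≤ r T - r 0 := sub_le_sub (h.monotoneOn htT (right_mem_Icc.2 hT) ht.2)
    (h.monotoneOn (left_mem_Icc.2 hT) hs hs.1)
  have hexp : Real.exp (-y) ≤ 1 := Real.exp_le_one_iff.2 (by linarith)
  have hq0 := hc.trans_le hqs
  have hqK := h.tiltedMoment_le hs 1 hx hzx
  have hpK := h.tiltedMoment_le hs 2 hx hzx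
  have heuler₁ := (abs_sub_le_iff.1 (hstep₁ s hs t ht y hy z hz)).2
  have heuler₂ := (abs_sub_le_iff.1 (hstep₂ s hs t ht y hy z hz)).1
  rw [tiltedReaction_one] at heuler₁
  rw [tiltedReaction_two] at heuler₂
  have hε₁ : 0 ≤ C₁ * (t - s) * (clock r t - clock r s) := by positivity
  have hε₂ : 0 ≤ C₂ * (t - s) * (clock r t - clock r s) := by positivity
  set m := max (tiltedMoment (w s) 2 z / tiltedMoment (w s) 1 z ^ 3) M
  have hMm : M ≤ m := le_max_right _ _
  have hmK : m ≤ K := max_le_max_right M (by gcongr)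
  refine max_le ?_ (hMm.trans (le_add_of_nonneg_right (by positivity)))
  refine (ratio_step_le (ε := (C₁ + C₂) * (t - s) * (clock r t - clock r s))
    (e := Real.exp (-y) * (r t - r s)) (A := A) hc hqs hqt (hM.trans (by gcongr)) hmK
    ((div_le_iff₀ (by positivity)).1 (le_max_left _ _)) hδ (by positivity) (by positivity)
    (add_le_add (by gcongr) ((mul_le_of_le_one_left hr hexp).trans hrT))
    (by linarith) (by linarith)).trans_eq (by ring)

lemma moment_two_le_of_initial (h : IsCriticalBurgersFlow T w r) (hc : 0 < c)
    (hcb : c ≤ tiltedMoment (w 0) 1 b) (hM : 1 ≤ 3 * M * c ^ 2)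
    (hinit : ∀ z, 0 < z → z ≤ b → tiltedMoment (w 0) 2 z ≤ M * tiltedMoment (w 0) 1 z ^ 3)
    (ht : t ∈ Icc 0 T) (hx : 0 < x) (hxb : x + t ≤ b) :
    tiltedMoment (w t) 2 x ≤ M * tiltedMoment (w t) 1 x ^ 3 := by
  have hT {τ : ℝ} (hτ : τ ∈ Icc 0 t) : τ ∈ Icc 0 T := ⟨hτ.1, hτ.2.trans ht.2⟩
  have h0 : (0 : ℝ) ∈ Icc 0 t := left_mem_Icc.2 ht.1
  have hlower {τ y : ℝ} (hτ : τ ∈ Icc 0 t) (hy : y ∈ Icc x (x + (t - τ))) :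
      c ≤ tiltedMoment (w τ) 1 y := by
    have hy0 : 0 < y := hx.trans_le hy.1
    calc c ≤ tiltedMoment (w 0) 1 b := hcb
      _ ≤ tiltedMoment (w 0) 1 (y + (τ - 0)) :=
          h.tiltedMoment_anti (hT h0) 1 (by linarith [hτ.1]) (by linarith [hy.2])
      _ ≤ tiltedMoment (w τ) 1 y := h.moment_one_shift_le (hT h0) (hT hτ) hy0
  obtain ⟨C, hstep⟩ := h.exists_moment_ratio_step_le hx hc hM
  have hratio : max (tiltedMoment (w t) 2 x / tiltedMoment (w t) 1 x ^ 3) M ≤ M := by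
    refine le_of_step_le (S := fun τ => Icc x (x + (t - τ)))
      (φ := fun τ y => max (tiltedMoment (w τ) 2 y / tiltedMoment (w τ) 1 y ^ 3) M) (ρ := clock r)
      (C := C) ht.1 (fun τ hτ τ' hτ' y hy => ?_) (fun z hz => max_le ?_ le_rfl) x (by simp)
    · set z := y + (τ' - τ) * (1 - tiltedMoment (w τ) 0 y) with hz
      have hzmem : z ∈ Icc x (x + (t - τ)) := by
        have hM0_le := h.tiltedMoment_zero_le_one (hT hτ) (hx.trans_le hy.1)
        have hM0_nonneg := h.tiltedMoment_nonneg (hT hτ) 0 y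
        constructor <;> nlinarith [hy.1, hy.2, hτ'.1]
      exact ⟨z, hzmem, hstep τ (hT hτ) τ' ⟨hτ'.1, hτ'.2.trans ht.2⟩ y hy.1 z hzmem.1 hz
        (hlower hτ hzmem) (hlower ⟨hτ.1.trans hτ'.1, hτ'.2⟩ hy)⟩
    · rw [div_le_iff₀ (pow_pos (hc.trans_le (hlower h0 hz)) 3)]
      exact hinit z (hx.trans_le hz.1) (by linarith [hz.2])
  have hpos := h.tiltedMoment_pos ht 1 hx
  exact (div_le_iff₀ (by positivity)).1 ((le_max_left _ _).trans hratio)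

lemma exists_moment_two_le (h : IsCriticalBurgersFlow T w r) (hT : 0 ≤ T)
    (h2 : Summable (tiltedTerm (w 0) 2 0)) (hb : 0 < b) :
    ∃ M, 0 < M ∧ ∀ t ∈ Icc 0 T, ∀ x ∈ Ioc 0 b,
      tiltedMoment (w t) 2 x ≤ M * tiltedMoment (w t) 1 x ^ 3 := by
  have h0 : (0 : ℝ) ∈ Icc 0 T := left_mem_Icc.2 hT
  set c := tiltedMoment (w 0) 1 (b + T)
  have hc : 0 < c := h.tiltedMoment_pos h0 1 (by linarith)
  set m := tiltedMoment (w 0) 2 0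
  have hm : 0 ≤ m := h.tiltedMoment_nonneg h0 2 0
  refine ⟨m / c ^ 3 + 1 / (3 * c ^ 2), by positivity, fun t ht x hx =>
    h.moment_two_le_of_initial hc le_rfl ?_ (fun z hz hzb => ?_) ht hx.1
      (add_le_add hx.2 ht.2)⟩
  · calc (1 : ℝ) ≤ 3 * m / c + 1 := le_add_of_nonneg_left (by positivity)
      _ = 3 * (m / c ^ 3 + 1 / (3 * c ^ 2)) * c ^ 2 := by field_simp
  · have hcz : c ≤ tiltedMoment (w 0) 1 z := h.tiltedMoment_anti h0 1 hz hzb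
    calc tiltedMoment (w 0) 2 z ≤ m := tiltedMoment_anti (h.nonneg 0 h0) h2 hz.le
      _ ≤ m + c / 3 := le_add_of_nonneg_right (by positivity)
      _ = (m / c ^ 3 + 1 / (3 * c ^ 2)) * c ^ 3 := by field_simp
      _ ≤ (m / c ^ 3 + 1 / (3 * c ^ 2)) * tiltedMoment (w 0) 1 z ^ 3 := by gcongr

end IsCriticalBurgersFlow

end MomentRatio

section Blowup

namespace IsCriticalBurgersFlow

variable {T : ℝ} {w : ℝ → ℕ → ℝ} {r : ℝ → ℝ} {b d s t x y L M : ℝ}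

lemma inv_sq_moment_one_le (h : IsCriticalBurgersFlow T w r) (ht : t ∈ Icc 0 T)
    (hM : ∀ z ∈ Ioc 0 x, tiltedMoment (w t) 2 z ≤ M * tiltedMoment (w t) 1 z ^ 3) (hy : 0 < y)
    (hyx : y ≤ x) :
    (tiltedMoment (w t) 1 x ^ 2)⁻¹ ≤ (tiltedMoment (w t) 1 y ^ 2)⁻¹ + 2 * M * (x - y) := by
  have hderiv : ∀ z, 0 < z → HasDerivAt (fun z => (tiltedMoment (w t) 1 z ^ 2)⁻¹)
      (2 * tiltedMoment (w t) 2 z / tiltedMoment (w t) 1 z ^ 3) z := by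
    intro z hz
    have hpos := h.tiltedMoment_pos ht 1 hz
    refine (((hasDerivAt_tiltedMoment (h.nonneg t ht) (h.summable t ht) 1 hz).pow 2).inv
      (pow_ne_zero 2 hpos.ne')).congr_deriv ?_
    simp only [Pi.pow_apply]
    push_cast
    field_simp
  have hslope := (convex_Icc y x).image_sub_le_mul_sub_of_deriv_le (C := 2 * M)
    (fun z hz => (hderiv z (hy.trans_le hz.1)).continuousAt.continuousWithinAt)
    (fun z hz =>
      (hderiv z (hy.trans_le (interior_subset hz).1)).differentiableAt.differentiableWithinAt)
    (fun z hz => ?_) y (left_mem_Icc.2 hyx) x (right_mem_Icc.2 hyx) hyx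
  · linarith
  · have hz' := interior_subset hz
    have hz0 := hy.trans_le hz'.1
    have hpos := h.tiltedMoment_pos ht 1 hz0
    rw [(hderiv z hz0).deriv, div_le_iff₀ (by positivity)]
    linarith [hM z ⟨hz0, hz'.2⟩]

lemma moment_one_le_two_mul (h : IsCriticalBurgersFlow T w r)
    (hM : ∀ τ ∈ Icc 0 T, ∀ z ∈ Ioc 0 b,
      tiltedMoment (w τ) 2 z ≤ M * tiltedMoment (w τ) 1 z ^ 3) (hM0 : 0 < M) (hL : 0 < L)
    (hdb : 2 * d ≤ b) (hdL : 16 * M * L ^ 2 * d ≤ 3) (hd : 0 < d) (hs : s ∈ Icc 0 T)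
    (ht : t ∈ Icc s T) (hts : t - s ≤ d) (hbound : ∀ z, 0 < z → tiltedMoment (w t) 1 z ≤ L)
    (hx : 0 < x) : tiltedMoment (w s) 1 x ≤ 2 * L := by
  have hfar : tiltedMoment (w s) 1 (2 * d) ≤ L := by
    have := h.moment_one_shift_le hs ht (x := 2 * d - (t - s)) (by linarith)
    rw [sub_add_cancel] at this
    exact this.trans (hbound _ (by linarith))
  rcases le_total x (2 * d) with hxd | hdx
  · have hpos := h.tiltedMoment_pos hs 1 hx
    have hfar_pos := h.tiltedMoment_pos hs 1 (by linarith : 0 < 2 * d)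
    have hslope := h.inv_sq_moment_one_le hs
      (fun z hz => hM s hs z ⟨hz.1, hz.2.trans hdb⟩) hx hxd
    have hinv : ((2 * L) ^ 2)⁻¹ ≤ (tiltedMoment (w s) 1 x ^ 2)⁻¹ :=
      calc ((2 * L) ^ 2)⁻¹ = (L ^ 2)⁻¹ - 3 / (4 * L ^ 2) := by
            field_simp
            norm_num
        _ ≤ (tiltedMoment (w s) 1 (2 * d) ^ 2)⁻¹ - 2 * M * (2 * d - x) := by
            have : 2 * M * (2 * d - x) ≤ 3 / (4 * L ^ 2) := by
              rw [le_div_iff₀ (by positivity)]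
              nlinarith [mul_pos (mul_pos hM0 hx) (pow_pos hL 2)]
            gcongr
        _ ≤ (tiltedMoment (w s) 1 x ^ 2)⁻¹ := by linarith
    rw [inv_le_inv₀ (by positivity) (by positivity)] at hinv
    exact (sq_le_sq₀ hpos.le (by positivity)).1 hinv
  · linarith [h.tiltedMoment_anti hs 1 (by linarith : 0 < 2 * d) hdx]

/-- The doubled bound holds on a whole short time interval, which is what the barrier needs to
transport the original bound backwards without loss. -/
lemma moment_one_le_of_le (h : IsCriticalBurgersFlow T w r)
    (hM : ∀ τ ∈ Icc 0 T, ∀ z ∈ Ioc 0 b,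
      tiltedMoment (w τ) 2 z ≤ M * tiltedMoment (w τ) 1 z ^ 3) (hM0 : 0 < M) (hb : 0 < b)
    (hL : 0 < L) (ht : t ∈ Icc 0 T) (hbound : ∀ z, 0 < z → tiltedMoment (w t) 1 z ≤ L) :
    ∀ s ∈ Icc 0 t, ∀ z, 0 < z → tiltedMoment (w s) 1 z ≤ L := by
  set d := min (b / 2) (3 / (16 * M * L ^ 2))
  have hd : 0 < d := by positivity
  have hdb : 2 * d ≤ b := by linarith [min_le_left (b / 2) (3 / (16 * M * L ^ 2))]
  have hdL : 16 * M * L ^ 2 * d ≤ 3 := (le_div_iff₀' (by positivity)).1 (min_le_right _ _)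
  refine backward_induction hd hbound fun s hs hbound_s s' hs' hds z hz => ?_
  have hsT : s ≤ T := hs.2.trans ht.2
  have hx : 0 < z * Real.exp (-(2 * L * (s - s'))) := by positivity
  have hback := (h.inv_moment_le_of_moment_le ⟨hs'.1, hs'.2.trans hsT⟩ ⟨hs'.2, hsT⟩ hx
    fun τ hτ y hy => h.moment_one_le_two_mul hM hM0 hL hdb hdL hd
      ⟨hs'.1.trans hτ.1, hτ.2.trans hsT⟩ ⟨hτ.2, hsT⟩ (by linarith [hτ.1]) hbound_s hy).1
  rw [mul_assoc, ← Real.exp_add, neg_add_cancel, Real.exp_zero, mul_one] at hback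
  exact hback.trans (hbound_s _ hx)

lemma inv_add_le_inv_moment_zero (h : IsCriticalBurgersFlow T w r)
    (h2 : Summable (tiltedTerm (w 0) 2 0)) (ht : t ∈ Icc 0 T) (hL : 0 < L)
    (hbound : ∀ s ∈ Icc 0 t, ∀ z, 0 < z → tiltedMoment (w s) 1 z ≤ L) :
    L⁻¹ + t ≤ (tiltedMoment (w 0) 1 0)⁻¹ := by
  have h0 : (0 : ℝ) ∈ Icc 0 T := ⟨le_rfl, ht.1.trans ht.2⟩
  have hinv : 0 < L⁻¹ + t := add_pos_of_pos_of_nonneg (by positivity) ht.1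
  have hupper : ∀ z, 0 < z → tiltedMoment (w 0) 1 z ≤ (L⁻¹ + t)⁻¹ := by
    intro z hz
    have hx : 0 < z * Real.exp (-(L * (t - 0))) := by positivity
    have hback := (h.inv_moment_le_of_moment_le h0 ht hx hbound).2
    rw [mul_assoc z, ← Real.exp_add, neg_add_cancel, Real.exp_zero, mul_one] at hback
    have hpos := h.tiltedMoment_pos ht 1 hx
    have := inv_anti₀ hpos (hbound t (right_mem_Icc.2 ht.1) _ hx)
    rw [le_inv_comm₀ (h.tiltedMoment_pos h0 1 hz) hinv]
    linarith
  have hlim : Tendsto (fun z => tiltedMoment (w 0) 1 0 - (z - 0) * tiltedMoment (w 0) 2 0)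
      (𝓝[>] 0) (𝓝 (tiltedMoment (w 0) 1 0 - (0 - 0) * tiltedMoment (w 0) 2 0)) :=
    Continuous.tendsto (by fun_prop) 0 |>.mono_left nhdsWithin_le_nhds
  have hle : tiltedMoment (w 0) 1 0 ≤ (L⁻¹ + t)⁻¹ := by
    rw [sub_self, zero_mul, sub_zero] at hlim
    refine le_of_tendsto hlim ?_
    filter_upwards [self_mem_nhdsWithin] with z hz
    exact (tiltedMoment_tangent_le (h.nonneg 0 h0) h2 (h.summable_tiltedTerm h0 1 hz)).trans
      (hupper z hz)
  have hpos : 0 < tiltedMoment (w 0) 1 0 := (h.tiltedMoment_pos h0 1 one_pos).trans_le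
    (tiltedMoment_anti (h.nonneg 0 h0) (summable_tiltedTerm_of_succ (h.nonneg 0 h0) h2)
      zero_le_one)
  exact (le_inv_comm₀ hpos hinv).1 hle

lemma tendsto_moment_one_atTop (h : IsCriticalBurgersFlow T w r)
    (h2 : Summable (tiltedTerm (w 0) 2 0)) (ht : t ∈ Icc 0 T)
    (hgel : (tiltedMoment (w 0) 1 0)⁻¹ ≤ t) : Tendsto (tiltedMoment (w t) 1) (𝓝[>] 0) atTop := by
  obtain ⟨M, hM0, hM⟩ := h.exists_moment_two_le (ht.1.trans ht.2) h2 one_pos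
  have hunbounded : ∀ L, ∃ z, 0 < z ∧ L < tiltedMoment (w t) 1 z := by
    by_contra! ⟨L, hL⟩
    have hL0 : 0 < L := (h.tiltedMoment_pos ht 1 one_pos).trans_le (hL 1 one_pos)
    have := h.inv_add_le_inv_moment_zero h2 ht hL0
      (h.moment_one_le_of_le hM hM0 one_pos hL0 ht hL)
    linarith [inv_pos.2 hL0]
  refine tendsto_atTop.2 fun L => ?_
  obtain ⟨z, hz, hLz⟩ := hunbounded L
  filter_upwards [Ioo_mem_nhdsGT hz] with x hx
  exact hLz.le.trans (h.tiltedMoment_anti ht 1 hx.1 hx.2.le)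

lemma rpow_le_moment_one (h : IsCriticalBurgersFlow T w r) (ht : t ∈ Icc 0 T)
    (hM : ∀ z ∈ Ioc 0 x, tiltedMoment (w t) 2 z ≤ M * tiltedMoment (w t) 1 z ^ 3) (hM0 : 0 < M)
    (hx : 0 < x) (hlim : Tendsto (tiltedMoment (w t) 1) (𝓝[>] 0) atTop) :
    (√(2 * M))⁻¹ * x ^ (-(1 : ℝ) / 2) ≤ tiltedMoment (w t) 1 x := by
  have hinv : (tiltedMoment (w t) 1 x ^ 2)⁻¹ ≤ 0 + 2 * M * (x - 0) := by
    refine ge_of_tendsto ((((tendsto_pow_atTop two_ne_zero).comp hlim).inv_tendsto_atTop).add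
      (Continuous.tendsto (by fun_prop : Continuous fun y => 2 * M * (x - y)) 0 |>.mono_left
        nhdsWithin_le_nhds)) ?_
    filter_upwards [Ioo_mem_nhdsGT hx] with y hy
    exact h.inv_sq_moment_one_le ht hM hy.1 hy.2.le
  have hpos := h.tiltedMoment_pos ht 1 hx
  rw [neg_div, Real.rpow_neg hx.le, ← Real.sqrt_eq_rpow, ← mul_inv,
    ← Real.sqrt_mul (by positivity), inv_le_comm₀ (by positivity) hpos]
  refine Real.le_sqrt_of_sq_le ?_
  rw [inv_pow]
  linarith

end IsCriticalBurgersFlow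

end Blowup

/-- for a conservative solution with `∑ k² v_k(0) < ∞` and
`T ≥ T_gel`, beyond the gelation time `−∂ₓV(t,x) ≥ C·x^(−1/2)` near `x = 0`;
in particular `∂ₓV(t, 0⁺) = −∞`. -/
theorem deriv_genFun_blowup (T : ℝ) (hT : 0 < T) (v : ℕ → ℝ → ℝ) (r : ℝ → ℝ) (Tgel : ℝ)
    (hsol : IsBurgersSolution T v r)
    (hcons : ∀ t ∈ Set.Icc (0:ℝ) T, HasSum (fun k : ℕ => v (k + 1) t) 1)
    (hm2 : Summable (fun k : ℕ => ((k : ℝ) + 1) ^ 2 * v (k + 1) 0))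
    (hTgel : Tgel = (∑' k : ℕ, ((k : ℝ) + 1) * v (k + 1) 0)⁻¹)
    (hTgelT : Tgel ≤ T) :
    (∀ tbar ∈ Set.Icc Tgel T, ∀ xbar : ℝ, 0 < xbar →
      ∃ C : ℝ, 0 < C ∧ ∀ t ∈ Set.Icc Tgel tbar, ∀ x ∈ Set.Ioc (0:ℝ) xbar,
        C * x ^ (-(1:ℝ)/2) ≤ -deriv (genFun v t) x) ∧
    (∀ t ∈ Set.Icc Tgel T,
      Tendsto (fun x => deriv (genFun v t) x) (𝓝[>] (0:ℝ)) atBot) := by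
  have h : IsCriticalBurgersFlow T (fun t k => v (k + 1) t) r := ⟨hsol.isBurgersFlow, hcons⟩
  have h2 : Summable (tiltedTerm (fun k => v (k + 1) 0) 2 0) :=
    hm2.congr fun k => by simp [tiltedTerm]
  have hgel : (tiltedMoment (fun k => v (k + 1) 0) 1 0)⁻¹ = Tgel := by
    simp [hTgel, tiltedMoment, tiltedTerm]
  have hmem : ∀ t ∈ Icc Tgel T, t ∈ Icc 0 T := fun t ht =>
    ⟨(hgel ▸ inv_nonneg.2 (h.tiltedMoment_nonneg (left_mem_Icc.2 hT.le) 1 0)).trans ht.1, ht.2⟩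
  have hlim : ∀ t ∈ Icc Tgel T, Tendsto (tiltedMoment (fun k => v (k + 1) t) 1) (𝓝[>] 0) atTop :=
    fun t ht => h.tendsto_moment_one_atTop h2 (hmem t ht) (hgel.trans_le ht.1)
  have hderiv : ∀ t ∈ Icc Tgel T, ∀ x, 0 < x →
      deriv (genFun v t) x = -tiltedMoment (fun k => v (k + 1) t) 1 x := fun t ht _ hx =>
    deriv_genFun (h.nonneg t (hmem t ht)) (h.summable t (hmem t ht)) hx
  refine ⟨fun tbar htbar xbar hxbar => ?_, fun t ht => ?_⟩
  · obtain ⟨M, hM0, hM⟩ := h.exists_moment_two_le hT.le h2 hxbar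
    refine ⟨(√(2 * M))⁻¹, by positivity, fun t ht x hx => ?_⟩
    have ht' : t ∈ Icc Tgel T := ⟨ht.1, ht.2.trans htbar.2⟩
    rw [hderiv t ht' x hx.1, neg_neg]
    exact h.rpow_le_moment_one (hmem t ht')
      (fun z hz => hM t (hmem t ht') z ⟨hz.1, hz.2.trans hx.2⟩) hM0 hx.1 (hlim t ht')
  · refine (tendsto_neg_atTop_atBot.comp (hlim t ht)).congr' ?_
    filter_upwards [self_mem_nhdsWithin] with x hx using (hderiv t ht x hx).symm
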